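/- arXiv:2005.08292 — 2 statements merged into one kernel-verified Lean document; each statement's English description precedes it below -/
import Mathlib

section
/- For every integer n ≥ 3, I(n) < I(n+1), where I(n) = (2√n/π) ∫₀^∞ ((sin t)/t)^n dt. -/
open MeasureTheory Real

/-- `I n = (2√n/π) ∫₀^∞ ((sin t)/t)^n dt`. -/
noncomputable def I (n : ℕ) : ℝ :=
  2 * Real.sqrt n / Real.pi * ∫ t in Set.Ioi (0 : ℝ), (Real.sin t / t) ^ n

theorem one_sub_pow_mul_exp_le (n : ℕ) {u : ℝ} (hu : 0 ≤ u) (hu1 : u < 1) :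
    (1 - u) ^ n * exp (n / (2 * (n + 1)) * u ^ 2) ≤ (1 - n / (n + 1) * u) ^ (n + 1) := by
  have hn : (0 : ℝ) < n + 1 := by positivity
  have hq : (n : ℝ) / (n + 1) ≤ 1 := (div_le_one hn).2 (by linarith)
  have hq0 : 0 ≤ (n : ℝ) / (n + 1) := by positivity
  have pos1 : ∀ v : ℝ, v < 1 → 0 < 1 - v := fun v hv => by linarith
  have pos2 : ∀ v : ℝ, 0 ≤ v → v < 1 → 0 < 1 - n / (n + 1) * v := fun v hv hv1 => by nlinarith
  let ψ : ℝ → ℝ := fun v => (n + 1) * log (1 - n / (n + 1) * v) - n * log (1 - v)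
    - n / (2 * (n + 1)) * v ^ 2
  have hd : ∀ v ∈ Set.Icc 0 u, HasDerivAt ψ ((n + 1) * (-(n / (n + 1)) / (1 - n / (n + 1) * v))
      - n * (-1 / (1 - v)) - n / (2 * (n + 1)) * (2 * v)) v := by
    intro v hv
    have h1 := pos1 v (hv.2.trans_lt hu1)
    have h2 := pos2 v hv.1 (hv.2.trans_lt hu1)
    have e1 : HasDerivAt (fun v : ℝ => 1 - n / (n + 1) * v) (-(n / (n + 1))) v := by
      simpa using ((hasDerivAt_id v).const_mul ((n : ℝ) / (n + 1))).const_sub 1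
    have e2 : HasDerivAt (fun v : ℝ => 1 - v) (-1) v := (hasDerivAt_id v).const_sub 1
    have e3 : HasDerivAt (fun v : ℝ => v ^ 2) (2 * v) v := by simpa using hasDerivAt_pow 2 v
    exact (((e1.log h2.ne').const_mul _).sub ((e2.log h1.ne').const_mul _)).sub (e3.const_mul _)
  have hmono : MonotoneOn ψ (Set.Icc 0 u) := by
    refine monotoneOn_of_deriv_nonneg (convex_Icc 0 u)
      (fun v hv => (hd v hv).continuousAt.continuousWithinAt)
      (fun v hv => (hd v (interior_subset hv)).differentiableAt.differentiableWithinAt) ?_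
    intro v hv
    have hv := interior_subset hv
    rw [(hd v hv).deriv]
    have h1 := pos1 v (hv.2.trans_lt hu1)
    have h2 := pos2 v hv.1 (hv.2.trans_lt hu1)
    have h3 : 0 < (n : ℝ) + 1 - n * v := by
      have : (n : ℝ) + 1 - n * v = (n + 1) * (1 - n / (n + 1) * v) := by field_simp
      rw [this]; positivity
    have hv0 := hv.1
    have key : ((n : ℝ) + 1) * (-(n / (n + 1)) / (1 - n / (n + 1) * v))
      - n * (-1 / (1 - v)) - n / (2 * (n + 1)) * (2 * v)
      = n * v ^ 2 * (n * (1 - v) + (n + 1)) / ((n + 1) * (1 - v) * (n + 1 - n * v)) := by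
      have h1' := h1.ne'
      have h2' := h2.ne'
      have h3' := h3.ne'
      have e : 1 - n / (n + 1) * v = (n + 1 - n * v) / (n + 1) := by field_simp
      rw [e]
      field_simp
      ring
    rw [key]
    positivity
  have h0 := hmono (Set.left_mem_Icc.2 hu) (Set.right_mem_Icc.2 hu) hu
  have h1 := pos1 u hu1
  have h2 := pos2 u hu hu1
  simp only [ψ, mul_zero, sub_zero, log_one, ne_eq, OfNat.ofNat_ne_zero, not_false_eq_true,
    zero_pow] at h0
  rw [← log_le_log_iff (by positivity) (by positivity), log_mul (by positivity) (by positivity),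
    log_pow, log_pow, log_exp]
  push_cast
  linarith

theorem tendsto_prod_sinc {y : ℝ} (hy : y ≠ 0) :
    Filter.Tendsto (fun m : ℕ => ∏ j ∈ Finset.range m, (1 - y ^ 2 / ((j : ℝ) + 1) ^ 2))
      Filter.atTop (nhds (sinc (π * y))) := by
  have hp : π * y ≠ 0 := mul_ne_zero pi_ne_zero hy
  rw [sinc_of_ne_zero hp]
  refine ((tendsto_euler_sin_prod y).div_const (π * y)).congr fun m => ?_
  rw [mul_div_cancel_left₀ _ hp]

theorem sinc_pow_mul_exp_le (n : ℕ) (hn : n ≠ 0) {x : ℝ} (hx : 0 < x) (hxπ : x < π) :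
    sinc x ^ n * exp (n / (180 * (n + 1)) * x ^ 4) ≤ sinc (√(n / (n + 1)) * x) ^ (n + 1) := by
  obtain ⟨y, rfl⟩ : ∃ y, x = π * y := ⟨x / π, by field_simp⟩
  have hy : 0 < y := pos_of_mul_pos_right hx pi_pos.le
  have hy1 : y < 1 := by nlinarith [pi_pos]
  have hn' : (0 : ℝ) < n := by positivity
  have hr : 0 < √((n : ℝ) / (n + 1)) := by positivity
  have hsum : HasSum (fun j : ℕ => 1 / ((j : ℝ) + 1) ^ 4) (π ^ 4 / 90) := by
    have := (hasSum_nat_add_iff' 1).2 hasSum_zeta_four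
    simpa using this
  have hexp : Filter.Tendsto (fun m : ℕ => exp (n / (2 * (n + 1)) * y ^ 4 *
      ∑ j ∈ Finset.range m, 1 / ((j : ℝ) + 1) ^ 4)) Filter.atTop
      (nhds (exp (n / (180 * (n + 1)) * (π * y) ^ 4))) := by
    have h := (hsum.tendsto_sum_nat.const_mul ((n : ℝ) / (2 * (n + 1)) * y ^ 4)).rexp
    convert h using 3
    field_simp
    norm_num
  have hr' := (tendsto_prod_sinc (mul_pos hr hy).ne').pow (n + 1)
  rw [show √((n : ℝ) / (n + 1)) * (π * y) = π * (√(n / (n + 1)) * y) by ring]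
  refine le_of_tendsto_of_tendsto' (((tendsto_prod_sinc hy.ne').pow n).mul hexp) hr' fun m => ?_
  rw [Finset.mul_sum, exp_sum, ← Finset.prod_pow, ← Finset.prod_pow, ← Finset.prod_mul_distrib]
  have hu : ∀ j : ℕ, 0 ≤ y ^ 2 / ((j : ℝ) + 1) ^ 2 ∧ y ^ 2 / ((j : ℝ) + 1) ^ 2 < 1 := by
    intro j
    refine ⟨by positivity, (div_lt_one (by positivity)).2 ?_⟩
    have : (0 : ℝ) ≤ j := by positivity
    nlinarith
  refine Finset.prod_le_prod (fun j _ => ?_) (fun j _ => ?_)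
  · have := sub_pos.2 (hu j).2
    positivity
  · have h := one_sub_pow_mul_exp_le n (hu j).1 (hu j).2
    rw [show (n : ℝ) / (2 * (n + 1)) * y ^ 4 * (1 / ((j : ℝ) + 1) ^ 4) =
      n / (2 * (n + 1)) * (y ^ 2 / ((j : ℝ) + 1) ^ 2) ^ 2 by field_simp]
    rwa [mul_pow, sq_sqrt (by positivity), mul_div_assoc]

theorem setIntegral_Ioi_le_of_hasDerivAt {f g g' : ℝ → ℝ} {a m : ℝ}
    (hf : IntegrableOn f (Set.Ioi a)) (hg : ∀ x ∈ Set.Ici a, HasDerivAt g (g' x) x)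
    (hfg : ∀ x ∈ Set.Ioi a, f x ≤ g' x) (hm : Filter.Tendsto g Filter.atTop (nhds m)) :
    ∫ x in Set.Ioi a, f x ≤ m - g a := by
  refine le_of_tendsto_of_tendsto
    (intervalIntegral_tendsto_integral_Ioi a hf Filter.tendsto_id) (hm.sub_const (g a)) ?_
  filter_upwards [Filter.eventually_ge_atTop a] with b hb
  refine intervalIntegral.integral_le_sub_of_hasDeriv_right_of_le hb
    (fun x hx => (hg x hx.1).continuousAt.continuousWithinAt)
    (fun x hx => (hg x hx.1.le).hasDerivWithinAt) ?_ (fun x hx => hfg x hx.1)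
  rw [integrableOn_Icc_iff_integrableOn_Ioc]
  exact hf.mono_set Set.Ioc_subset_Ioi_self

theorem tendsto_div_pow_atTop_zero {f : ℝ → ℝ} {C : ℝ} {k : ℕ} (hk : k ≠ 0)
    (hf : ∀ x, |f x| ≤ C) :
    Filter.Tendsto (fun x => f x / x ^ k) Filter.atTop (nhds 0) := by
  simp only [div_eq_mul_inv]
  exact bdd_le_mul_tendsto_zero' C (Filter.Eventually.of_forall hf)
    (Filter.tendsto_pow_atTop hk).inv_tendsto_atTop

theorem abs_sinc_le_quarter {t : ℝ} (ht : π ≤ t) : |sinc t| ≤ 1 / 4 := by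
  have h3 := pi_gt_three
  have h0 : 0 < t := by linarith
  rw [sinc_of_ne_zero h0.ne', abs_div, abs_of_pos h0, div_le_iff₀ h0]
  have h1 := abs_sin_le_one t
  have h2 : |sin t| ≤ t - π := by
    have := abs_sin_le_abs (x := t - π)
    rwa [sin_sub_pi, abs_neg, abs_of_nonneg (sub_nonneg.2 ht)] at this
  rcases le_total t 4 with h | h <;> linarith

theorem integrableOn_sinc_pow {n : ℕ} (hn : 2 ≤ n) :
    IntegrableOn (fun t => sinc t ^ n) (Set.Ioi π) := by
  have hb : IntegrableOn (fun t : ℝ => t ^ (-2 : ℝ)) (Set.Ioi π) :=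
    integrableOn_Ioi_rpow_of_lt (by norm_num) pi_pos
  refine Integrable.mono' hb (continuous_sinc.pow n).aestronglyMeasurable ?_
  refine (ae_restrict_iff' measurableSet_Ioi).2 (Filter.Eventually.of_forall fun t ht => ?_)
  have h0 : 0 < t := pi_pos.trans ht
  have h1 : |sinc t| ≤ 1 / t := by
    rw [sinc_of_ne_zero h0.ne', abs_div, abs_of_pos h0]
    gcongr
    exact abs_sin_le_one t
  rw [norm_pow, norm_eq_abs, rpow_neg h0.le, rpow_two]
  calc |sinc t| ^ n ≤ |sinc t| ^ 2 :=
        pow_le_pow_of_le_one (abs_nonneg _) (abs_sinc_le_one t) hn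
    _ ≤ (1 / t) ^ 2 := by gcongr
    _ = (t ^ 2)⁻¹ := by simp

theorem setIntegral_sinc_cube_nonpos : ∫ t in Set.Ioi π, sinc t ^ 3 ≤ 0 := by
  let G : ℝ → ℝ := fun t => -cos t + cos t ^ 3 / 3 - 2 / 3
  have hG : ∀ t, HasDerivAt G (sin t ^ 3) t := by
    intro t
    have := (((hasDerivAt_cos t).neg).add (((hasDerivAt_cos t).pow 3).div_const 3)).sub_const (2 / 3)
    refine this.congr_deriv ?_
    simp
    linear_combination -sin t * sin_sq_add_cos_sq t
  have hG0 : ∀ t, G t ≤ 0 := by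
    intro t
    simp only [G]
    nlinarith [cos_le_one t, neg_one_le_cos t, mul_nonneg (sq_nonneg (cos t + 1)) (sub_nonneg.2 (cos_le_one t))]
  have hGb : ∀ t, |G t| ≤ 4 := by
    intro t
    rw [abs_le]
    refine ⟨?_, (hG0 t).trans (by norm_num)⟩
    have : -1 ≤ cos t ^ 3 := by nlinarith [neg_one_le_cos t, cos_le_one t, sq_nonneg (cos t), sq_nonneg (cos t - 1)]
    simp only [G]
    linarith [cos_le_one t]
  have h := setIntegral_Ioi_le_of_hasDerivAt (a := π) (g := fun t => G t / t ^ 3)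
    (g' := fun t => (sin t ^ 3 * t ^ 3 - G t * (3 * t ^ 2)) / (t ^ 3) ^ 2)
    (integrableOn_sinc_pow (n := 3) (by norm_num)) ?_ ?_
    (tendsto_div_pow_atTop_zero (by norm_num) hGb)
  · refine h.trans (le_of_eq ?_)
    norm_num [G]
  · intro t ht
    have h0 : 0 < t := pi_pos.trans_le ht
    have e : HasDerivAt (fun t : ℝ => t ^ 3) (3 * t ^ 2) t := by simpa using hasDerivAt_pow 3 t
    exact (hG t).div e (by positivity)
  · intro t ht
    have h0 : 0 < t := pi_pos.trans ht
    have : (sin t ^ 3 * t ^ 3 - G t * (3 * t ^ 2)) / (t ^ 3) ^ 2 - (sin t / t) ^ 3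
        = 3 * (-G t) / t ^ 4 := by
      field_simp
      ring
    have h2 : 0 ≤ -G t := neg_nonneg.2 (hG0 t)
    have h3 : 0 ≤ 3 * (-G t) / t ^ 4 := by positivity
    rw [sinc_of_ne_zero h0.ne']
    linarith

theorem setIntegral_sinc_pow_four_le : ∫ t in Set.Ioi π, sinc t ^ 4 ≤ 1 / (8 * π ^ 3) := by
  let S : ℝ → ℝ := fun t => -(3 / 8) * sin t * cos t - sin t ^ 3 * cos t / 4
  let T : ℝ → ℝ := fun t => -(3 / 16) * sin t ^ 2 - sin t ^ 4 / 16
  have hS : ∀ t, HasDerivAt S (sin t ^ 4 - 3 / 8) t := by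
    intro t
    have := (((hasDerivAt_sin t).const_mul (-(3 / 8))).mul (hasDerivAt_cos t)).sub
      ((((hasDerivAt_sin t).pow 3).mul (hasDerivAt_cos t)).div_const 4)
    refine this.congr_deriv ?_
    simp
    linear_combination (-(3 / 8) - 3 / 4 * sin t ^ 2) * sin_sq_add_cos_sq t
  have hT : ∀ t, HasDerivAt T (S t) t := by
    intro t
    have := (((hasDerivAt_sin t).pow 2).const_mul (-(3 / 16))).sub
      (((hasDerivAt_sin t).pow 4).div_const 16)
    refine this.congr_deriv ?_
    simp [S]
    ring
  have hT0 : ∀ t, T t ≤ 0 := by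
    intro t
    simp only [T]
    nlinarith [sq_nonneg (sin t), sq_nonneg (sin t ^ 2)]
  have hSb : ∀ t, |S t| ≤ 1 := by
    intro t
    have h1 : |sin t * cos t| ≤ 1 := by
      rw [abs_mul]
      exact mul_le_one₀ (abs_sin_le_one t) (abs_nonneg _) (abs_cos_le_one t)
    have e : S t = -(sin t * cos t * (3 / 8 + sin t ^ 2 / 4)) := by simp only [S]; ring
    rw [e, abs_neg, abs_mul, abs_of_nonneg (a := 3 / 8 + sin t ^ 2 / 4) (by positivity)]
    exact mul_le_one₀ h1 (by positivity) (by linarith [sin_sq_le_one t])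
  have hTb : ∀ t, |T t| ≤ 1 := by
    intro t
    rw [abs_le]
    refine ⟨?_, (hT0 t).trans (by norm_num)⟩
    simp only [T]
    nlinarith [sin_sq_le_one t, sq_nonneg (sin t)]
  have hlim := ((tendsto_div_pow_atTop_zero (k := 4) (by norm_num) hSb).add
    ((tendsto_div_pow_atTop_zero (k := 5) (by norm_num) hTb).const_mul 4)).sub
    (tendsto_div_pow_atTop_zero (f := fun _ => 1 / 8) (C := 1) (k := 3) (by norm_num)
      (fun _ => by norm_num))
  have h := setIntegral_Ioi_le_of_hasDerivAt (a := π)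
    (g := fun t => S t / t ^ 4 + 4 * (T t / t ^ 5) - 1 / 8 / t ^ 3)
    (g' := fun t => sin t ^ 4 / t ^ 4 - 20 * T t / t ^ 6)
    (integrableOn_sinc_pow (n := 4) (by norm_num)) ?_ ?_ hlim
  · refine h.trans (le_of_eq ?_)
    simp only [S, T, sin_pi]
    field_simp
    norm_num
  · intro t ht
    have h0 : 0 < t := pi_pos.trans_le ht
    have e : ∀ k : ℕ, HasDerivAt (fun t : ℝ => t ^ k) (k * t ^ (k - 1)) t :=
      fun k => hasDerivAt_pow k t
    refine ((((hS t).div (e 4) (by positivity)).add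
      (((hT t).div (e 5) (by positivity)).const_mul 4)).sub
      ((hasDerivAt_const t (1 / 8 : ℝ)).div (e 3) (by positivity))).congr_deriv ?_
    push_cast
    field_simp
    norm_num
    ring
  · intro t ht
    have h0 : 0 < t := pi_pos.trans ht
    have h2 : 0 ≤ -T t := neg_nonneg.2 (hT0 t)
    have h3 : 0 ≤ 20 * (-T t) / t ^ 6 := by positivity
    rw [sinc_of_ne_zero h0.ne', div_pow]
    have : 20 * (-T t) / t ^ 6 = -(20 * T t / t ^ 6) := by ring
    linarith

theorem sinc_nonneg_of_mem_Icc {x : ℝ} (h0 : 0 ≤ x) (h1 : x ≤ π) : 0 ≤ sinc x := by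
  rcases h0.eq_or_lt with rfl | h0
  · simp
  · rw [sinc_of_ne_zero h0.ne']
    exact div_nonneg (sin_nonneg_of_nonneg_of_le_pi h0.le h1) h0.le

theorem sqrt_mul_integral_sinc_pow_succ_ge {n : ℕ} (hn : n ≠ 0) :
    √n * ((∫ x in 0..π, sinc x ^ n) + n / (180 * (n + 1)) * ∫ x in 0..π, x ^ 4 * sinc x ^ n) ≤
      √(n + 1 : ℕ) * ∫ x in 0..π, sinc x ^ (n + 1) := by
  set r := √((n : ℝ) / (n + 1)) with hr
  have hn' : (0 : ℝ) < n := by positivity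
  have hr0 : 0 < r := by positivity
  have hr1 : r ≤ 1 := by
    rw [hr, sqrt_le_one]
    exact (div_le_one (by positivity)).2 (by linarith)
  have hc := continuous_sinc
  have h1 : ∫ x in 0..r * π, sinc x ^ (n + 1) ≤ ∫ x in 0..π, sinc x ^ (n + 1) := by
    refine intervalIntegral.integral_mono_interval le_rfl (by positivity)
      (by nlinarith [pi_pos]) ?_ ((hc.pow _).intervalIntegrable _ _)
    refine (ae_restrict_iff' measurableSet_Ioc).2 (Filter.Eventually.of_forall fun x hx => ?_)
    exact pow_nonneg (sinc_nonneg_of_mem_Icc hx.1.le hx.2) _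
  have h2 : ∫ x in 0..r * π, sinc x ^ (n + 1) = r * ∫ x in 0..π, sinc (r * x) ^ (n + 1) := by
    rw [intervalIntegral.integral_comp_mul_left (fun x => sinc x ^ (n + 1)) hr0.ne', smul_eq_mul,
      mul_inv_cancel_left₀ hr0.ne', mul_zero]
  have h3 : (∫ x in 0..π, sinc x ^ n) + n / (180 * (n + 1)) * ∫ x in 0..π, x ^ 4 * sinc x ^ n ≤
      ∫ x in 0..π, sinc (r * x) ^ (n + 1) := by
    rw [← intervalIntegral.integral_const_mul, ← intervalIntegral.integral_add
      (Continuous.intervalIntegrable (by fun_prop) _ _)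
      (Continuous.intervalIntegrable (by fun_prop) _ _)]
    refine intervalIntegral.integral_mono_on_of_le_Ioo pi_pos.le
      (Continuous.intervalIntegrable (by fun_prop) _ _)
      (Continuous.intervalIntegrable (by fun_prop) _ _) fun x hx => ?_
    refine le_trans ?_ (sinc_pow_mul_exp_le n hn hx.1 hx.2)
    have := mul_le_mul_of_nonneg_left (add_one_le_exp (n / (180 * (n + 1)) * x ^ 4))
      (pow_nonneg (sinc_nonneg_of_mem_Icc hx.1.le hx.2.le) n)
    linarith
  have h4 : √(n + 1 : ℕ) * r = √n := by
    rw [hr, ← sqrt_mul (by positivity)]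
    congr 1
    push_cast
    field_simp
  calc _ ≤ √n * ∫ x in 0..π, sinc (r * x) ^ (n + 1) := by gcongr
    _ = √(n + 1 : ℕ) * ∫ x in 0..r * π, sinc x ^ (n + 1) := by rw [h2, ← h4]; ring
    _ ≤ _ := by gcongr

theorem integral_sin_pow_four_eq (b : ℝ) :
    ∫ x in 0..b, sin x ^ 4 = 3 / 8 * b - 3 / 8 * (sin b * cos b) - sin b ^ 3 * cos b / 4 := by
  rw [intervalIntegral.integral_eq_sub_of_hasDerivAt
    (f := fun t => 3 / 8 * t - 3 / 8 * (sin t * cos t) - sin t ^ 3 * cos t / 4)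
    (fun t _ => ?_) (Continuous.intervalIntegrable (by fun_prop) _ _)]
  · simp
  · have := (((hasDerivAt_id t).const_mul (3 / 8)).sub
      (((hasDerivAt_sin t).mul (hasDerivAt_cos t)).const_mul (3 / 8))).sub
      ((((hasDerivAt_sin t).pow 3).mul (hasDerivAt_cos t)).div_const 4)
    refine this.congr_deriv ?_
    simp
    linear_combination (-(3 / 8) - 3 / 4 * sin t ^ 2) * sin_sq_add_cos_sq t

theorem pow_mul_sinc_pow {x : ℝ} (hx : x ≠ 0) (k m : ℕ) :
    x ^ k * sinc x ^ (k + m) = sin x ^ k * sinc x ^ m := by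
  rw [pow_add, ← mul_assoc, ← mul_pow, sinc_of_ne_zero hx, mul_div_cancel₀ _ hx]

theorem integral_pow_four_mul_sinc_pow_ge (m : ℕ) :
    3 * π / 8 * (1 / 4) ^ m ≤ ∫ x in 0..π, x ^ 4 * sinc x ^ (4 + m) := by
  have hc := continuous_sinc
  rcases Nat.eq_zero_or_pos m with rfl | hm
  · have h : 3 * π / 8 = ∫ x in 0..π, sin x ^ 4 := by
      rw [integral_sin_pow_four_eq]
      simp
      ring
    rw [pow_zero, mul_one, h]
    refine intervalIntegral.integral_mono_on_of_le_Ioo pi_pos.le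
      (Continuous.intervalIntegrable (by fun_prop) _ _)
      (Continuous.intervalIntegrable (by fun_prop) _ _) fun x hx => ?_
    rw [pow_mul_sinc_pow hx.1.ne', pow_zero, mul_one]
  · have hpi := pi_pos
    have h : 3 * π / 16 = ∫ x in 0..π / 2, sin x ^ 4 := by
      rw [integral_sin_pow_four_eq]
      simp
      ring
    have hm' : ((1 : ℝ) / 2) ^ m ≤ 1 / 2 := pow_le_of_le_one (by norm_num) (by norm_num) hm.ne'
    calc 3 * π / 8 * (1 / 4) ^ m = 3 * π / 8 * ((1 / 2) ^ m * (1 / 2) ^ m) := by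
          rw [← mul_pow]; norm_num
      _ ≤ 3 * π / 8 * (1 / 2 * (1 / 2) ^ m) := by gcongr
      _ = ∫ x in 0..π / 2, sin x ^ 4 * (1 / 2) ^ m := by
          rw [intervalIntegral.integral_mul_const, ← h]; ring
      _ ≤ ∫ x in 0..π / 2, x ^ 4 * sinc x ^ (4 + m) := by
          refine intervalIntegral.integral_mono_on_of_le_Ioo (by positivity)
            (Continuous.intervalIntegrable (by fun_prop) _ _)
            (Continuous.intervalIntegrable (by fun_prop) _ _) fun x hx => ?_
          rw [pow_mul_sinc_pow hx.1.ne']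
          have hx0 := hx.1
          have : 1 / 2 ≤ sinc x := by
            rw [sinc_of_ne_zero hx0.ne', le_div_iff₀ hx0]
            refine le_trans ?_ (mul_le_sin hx0.le hx.2.le)
            gcongr ?_ * x
            rw [div_le_div_iff₀ two_pos pi_pos]
            linarith [pi_le_four]
          gcongr
      _ ≤ ∫ x in 0..π, x ^ 4 * sinc x ^ (4 + m) := by
          refine intervalIntegral.integral_mono_interval le_rfl (by positivity)
            (by linarith) ?_ (Continuous.intervalIntegrable (by fun_prop) _ _)
          refine (ae_restrict_iff' measurableSet_Ioc).2 (Filter.Eventually.of_forall fun x hx => ?_)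
          exact mul_nonneg (by positivity) (pow_nonneg (sinc_nonneg_of_mem_Icc hx.1.le hx.2) _)

theorem abs_setIntegral_sinc_pow_le (m : ℕ) :
    |∫ t in Set.Ioi π, sinc t ^ (4 + m)| ≤ (1 / 4) ^ m / (8 * π ^ 3) := by
  calc |∫ t in Set.Ioi π, sinc t ^ (4 + m)| ≤ ∫ t in Set.Ioi π, (1 / 4) ^ m * sinc t ^ 4 := by
        rw [← norm_eq_abs]
        refine norm_integral_le_of_norm_le
          ((integrableOn_sinc_pow (n := 4) (by norm_num)).const_mul _) ?_
        refine (ae_restrict_iff' measurableSet_Ioi).2 (Filter.Eventually.of_forall fun t ht => ?_)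
        rw [pow_add, norm_mul, mul_comm, norm_pow, norm_eq_abs, norm_eq_abs,
          abs_of_nonneg (by positivity : 0 ≤ sinc t ^ 4)]
        gcongr
        exact abs_sinc_le_quarter (le_of_lt ht)
    _ ≤ (1 / 4) ^ m * (1 / (8 * π ^ 3)) := by
        rw [integral_const_mul]
        gcongr
        exact setIntegral_sinc_pow_four_le
    _ = _ := by ring

theorem I_eq_sinc {n : ℕ} (hn : 2 ≤ n) :
    I n = 2 / π * (√n * ((∫ x in 0..π, sinc x ^ n) + ∫ t in Set.Ioi π, sinc t ^ n)) := by
  have h1 : ∫ t in Set.Ioi (0 : ℝ), (sin t / t) ^ n = ∫ t in Set.Ioi (0 : ℝ), sinc t ^ n :=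
    setIntegral_congr_fun measurableSet_Ioi fun t (ht : 0 < t) => by
      simp only [sinc_of_ne_zero ht.ne']
  have h2 : IntegrableOn (fun t => sinc t ^ n) (Set.Ioc 0 π) :=
    ((continuous_sinc.pow n).integrableOn_Icc).mono_set Set.Ioc_subset_Icc_self
  rw [I, h1, ← Set.Ioc_union_Ioi_eq_Ioi pi_pos.le,
    setIntegral_union (Set.Ioc_disjoint_Ioi le_rfl) measurableSet_Ioi h2 (integrableOn_sinc_pow hn),
    intervalIntegral.integral_of_le pi_pos.le]
  ring

/-- `I (n) < I (n+1)` for every integer `n ≥ 3`. -/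
theorem I_strict_mono (n : ℕ) (hn : 3 ≤ n) : I n < I (n + 1) := by
  have hpi := pi_pos
  rw [I_eq_sinc (by lia), I_eq_sinc (by lia)]
  refine mul_lt_mul_of_pos_left ?_ (by positivity)
  have hmain := sqrt_mul_integral_sinc_pow_succ_ge (n := n) (by lia)
  have hs : 0 < √(n : ℝ) := by
    have : 0 < n := by lia
    positivity
  rcases hn.eq_or_lt with h | hn
  · have hM : 0 < ∫ x in 0..π, x ^ 4 * sinc x ^ n := by
      have hc := continuous_sinc
      refine intervalIntegral.intervalIntegral_pos_of_pos_on
        (Continuous.intervalIntegrable (by fun_prop) _ _) (fun x hx => ?_) pi_pos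
      have hx0 := hx.1
      have := sin_pos_of_pos_of_lt_pi hx.1 hx.2
      rw [sinc_of_ne_zero hx0.ne']
      positivity
    have hB : √n * ∫ t in Set.Ioi π, sinc t ^ n ≤ 0 :=
      mul_nonpos_of_nonneg_of_nonpos hs.le (h ▸ setIntegral_sinc_cube_nonpos)
    have hB' : 0 ≤ √(n + 1 : ℕ) * ∫ t in Set.Ioi π, sinc t ^ (n + 1) :=
      mul_nonneg (sqrt_nonneg _)
        (integral_nonneg fun t => Even.pow_nonneg (h ▸ by decide) _)
    have hn0 : (0 : ℝ) < n := by exact_mod_cast (by lia : 0 < n)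
    have : 0 < √n * (n / (180 * (n + 1)) * ∫ x in 0..π, x ^ 4 * sinc x ^ n) := by
      positivity
    linarith
  · obtain ⟨m, rfl⟩ := Nat.exists_eq_add_of_le (show 4 ≤ n from hn)
    have hM := integral_pow_four_mul_sinc_pow_ge m
    have hB := (abs_le.1 (abs_setIntegral_sinc_pow_le m)).2
    have hB' := (abs_le.1 (abs_setIntegral_sinc_pow_le (m + 1))).1
    rw [← add_assoc] at hB'
    have hq : (0 : ℝ) < (1 / 4) ^ m := by positivity
    have hcoef : (1 : ℝ) / 225 ≤ (4 + m : ℕ) / (180 * ((4 + m : ℕ) + 1)) := by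
      rw [div_le_div_iff₀ (by norm_num) (by positivity)]
      push_cast
      linarith [m.cast_nonneg (α := ℝ)]
    have hsqrt : √(4 + m + 1 : ℕ) ≤ 28 / 25 * √(4 + m : ℕ) := by
      rw [sqrt_le_left (by positivity), mul_pow, sq_sqrt (by positivity)]
      push_cast
      linarith [m.cast_nonneg (α := ℝ)]
    have hnum : 32 / 25 / (8 * π ^ 3) < 1 / 225 * (3 * π / 8) := by
      have h4 : (3.14 : ℝ) ^ 4 < π ^ 4 := by
        gcongr
        exact pi_gt_d2
      rw [div_lt_iff₀ (by positivity)]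
      nlinarith
    have hlow : 32 / 25 / (8 * π ^ 3) * (1 / 4) ^ m < (4 + m : ℕ) / (180 * ((4 + m : ℕ) + 1)) *
        ∫ x in 0..π, x ^ 4 * sinc x ^ (4 + m) := by
      calc _ < 1 / 225 * (3 * π / 8) * (1 / 4) ^ m := by gcongr
        _ = 1 / 225 * (3 * π / 8 * (1 / 4) ^ m) := by ring
        _ ≤ _ := by gcongr
    have h1 := mul_lt_mul_of_pos_left hlow hs
    have h2 := mul_le_mul_of_nonneg_left hB hs.le
    have h3 := mul_le_mul_of_nonneg_left hB' (sqrt_nonneg (4 + m + 1 : ℕ))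
    have h4 : √(4 + m + 1 : ℕ) * ((1 / 4) ^ (m + 1) / (8 * π ^ 3)) ≤
        28 / 25 * √(4 + m : ℕ) * ((1 / 4) ^ (m + 1) / (8 * π ^ 3)) := by gcongr
    have h5 : √(4 + m : ℕ) * (32 / 25 / (8 * π ^ 3) * (1 / 4) ^ m) =
        √(4 + m : ℕ) * ((1 / 4) ^ m / (8 * π ^ 3)) +
        28 / 25 * √(4 + m : ℕ) * ((1 / 4) ^ (m + 1) / (8 * π ^ 3)) := by ring
    linarith
end

section
/- Let t(x) : [0, x(1.1)] → [0, 1.1] be the inverse of the function x(t) = √(−6 log((sin t)/t)). Then t is seven times differentiable on [0, x(1.1)] and |t⁽⁷⁾(x)| ≤ 0.50344 for all x ∈ [0, x(1.1)]. -/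
open Real Set

/-- `x(t) = √(-6 log((sin t)/t))`, with `(sin t)/t` taken to be `1` at `t = 0`. -/
noncomputable def xfun (t : ℝ) : ℝ :=
  Real.sqrt (-6 * Real.log (if t = 0 then 1 else Real.sin t / t))

/-- The recursion producing the coefficients of index `n + 1` of `W` and `B`, where `t = x W(x²)` is
the inverse function and `3 (1 - t cot t) = x² B(x²)`, from those of index at most `n`. -/
def coeffStep (n : ℕ) (f : ℕ → ℚ × ℚ) : ℚ × ℚ :=
  let N : ℚ := n + 1
  let R := -∑ i ∈ Finset.range n, (2 * i + 3) * ((f (i + 1)).1 * (f (n - i)).2)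
  let S := 3 * ∑ i ∈ Finset.range n, (f (i + 1)).1 * (f (n - i)).1
    - (N + 2) * ∑ i ∈ Finset.range n, (f (i + 1)).2 * (f (n - i)).2
    + (∑ i ∈ Finset.range (n + 1), (f i).2 * (f (n - i)).2) / 3
  (((2 * N + 5) * R - S) / (4 * N ^ 2 + 10 * N + 6),
    (6 * R + 2 * N * S) / (4 * N ^ 2 + 10 * N + 6))

/-- `coeffTable n k` is the `k`-th pair of coefficients, for `k ≤ n`. -/
def coeffTable : ℕ → ℕ → ℚ × ℚ
  | 0 => fun _ => (1, 1)
  | n + 1 => fun k => if k ≤ n then coeffTable n k else coeffStep n (coeffTable n)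

/-- The coefficients of `W`. -/
def wCoeff (n : ℕ) : ℚ := (coeffTable n n).1

/-- The coefficients of `B`. -/
def bCoeff (n : ℕ) : ℚ := (coeffTable n n).2

theorem coeffTable_eq {n k : ℕ} (h : k ≤ n) : coeffTable n k = coeffTable k k := by
  induction n with
  | zero => rw [Nat.le_zero.mp h]
  | succ n ih =>
    rcases Nat.lt_or_ge n k with h' | h'
    · rw [show k = n + 1 by omega]
    · rw [← ih h']
      simp [coeffTable, h']

theorem coeffStep_congr {n : ℕ} {f g : ℕ → ℚ × ℚ} (h : ∀ k ≤ n, f k = g k) :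
    coeffStep n f = coeffStep n g := by
  have h1 : ∀ i ∈ Finset.range n, f (i + 1) = g (i + 1) :=
    fun i hi => h _ (Finset.mem_range.mp hi)
  have h2 : ∀ i ∈ Finset.range (n + 1), f i = g i :=
    fun i hi => h _ (Nat.lt_succ_iff.mp (Finset.mem_range.mp hi))
  have h3 : ∀ i, f (n - i) = g (n - i) := fun i => h _ (Nat.sub_le _ _)
  have s1 : ∑ i ∈ Finset.range n, (2 * (i : ℚ) + 3) * ((f (i + 1)).1 * (g (n - i)).2)
      = ∑ i ∈ Finset.range n, (2 * (i : ℚ) + 3) * ((g (i + 1)).1 * (g (n - i)).2) :=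
    Finset.sum_congr rfl fun i hi => by rw [h1 i hi]
  have s2 : ∑ i ∈ Finset.range n, (f (i + 1)).1 * (g (n - i)).1
      = ∑ i ∈ Finset.range n, (g (i + 1)).1 * (g (n - i)).1 :=
    Finset.sum_congr rfl fun i hi => by rw [h1 i hi]
  have s3 : ∑ i ∈ Finset.range n, (f (i + 1)).2 * (g (n - i)).2
      = ∑ i ∈ Finset.range n, (g (i + 1)).2 * (g (n - i)).2 :=
    Finset.sum_congr rfl fun i hi => by rw [h1 i hi]
  have s4 : ∑ i ∈ Finset.range (n + 1), (f i).2 * (g (n - i)).2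
      = ∑ i ∈ Finset.range (n + 1), (g i).2 * (g (n - i)).2 :=
    Finset.sum_congr rfl fun i hi => by rw [h2 i hi]
  simp only [coeffStep, h3, s1, s2, s3, s4]

theorem coeffTable_succ_self (n : ℕ) :
    coeffTable (n + 1) (n + 1) = coeffStep n (fun k => (wCoeff k, bCoeff k)) := by
  have h : coeffTable (n + 1) (n + 1) = coeffStep n (coeffTable n) := by simp [coeffTable]
  rw [h]
  exact coeffStep_congr fun k hk => coeffTable_eq hk

/-- The inner part of the convolution of `u` and `v` at index `n + 1`. -/
def innerConv (u v : ℕ → ℚ) (n : ℕ) : ℚ := ∑ i ∈ Finset.range n, u (i + 1) * v (n - i)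

/-- As `innerConv`, with the derivative weight on `u`. -/
def innerConvDeriv (u v : ℕ → ℚ) (n : ℕ) : ℚ :=
  ∑ i ∈ Finset.range n, (2 * i + 3) * (u (i + 1) * v (n - i))

/-- The coefficients of the product of two power series. -/
def conv (u v : ℕ → ℚ) (n : ℕ) : ℚ := ∑ i ∈ Finset.range (n + 1), u i * v (n - i)

/-- The terms of the recursion for `bCoeff` that involve only lower coefficients. -/
def innerSource (n : ℕ) : ℚ :=
  3 * innerConv wCoeff wCoeff n - (n + 3) * innerConv bCoeff bCoeff n + conv bCoeff bCoeff n / 3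

theorem wCoeff_zero : wCoeff 0 = 1 := rfl

theorem bCoeff_zero : bCoeff 0 = 1 := rfl

theorem wCoeff_succ (n : ℕ) : wCoeff (n + 1) =
    (-(2 * (n + 1) + 5) * innerConvDeriv wCoeff bCoeff n - innerSource n) /
      (4 * (n + 1) ^ 2 + 10 * (n + 1) + 6) := by
  rw [wCoeff, coeffTable_succ_self]
  simp only [coeffStep, innerSource, innerConv, innerConvDeriv, conv]
  congr 1
  ring

theorem bCoeff_succ (n : ℕ) : bCoeff (n + 1) =
    (-6 * innerConvDeriv wCoeff bCoeff n + 2 * (n + 1) * innerSource n) /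
      (4 * (n + 1) ^ 2 + 10 * (n + 1) + 6) := by
  rw [bCoeff, coeffTable_succ_self]
  simp only [coeffStep, innerSource, innerConv, innerConvDeriv, conv]
  congr 1
  ring

theorem conv_succ (u v : ℕ → ℚ) (n : ℕ) :
    conv u v (n + 1) = u 0 * v (n + 1) + u (n + 1) * v 0 + innerConv u v n := by
  rw [conv, innerConv, Finset.sum_range_succ, Finset.sum_range_succ']
  have : ∀ i, n + 1 - (i + 1) = n - i := fun i => by omega
  simp only [this, Nat.sub_zero, Nat.sub_self]
  ring

/-- Coefficient form of `B (W + 2 s W') = W`. -/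
theorem conv_deriv_wCoeff (n : ℕ) :
    conv (fun k => (2 * k + 1) * wCoeff k) bCoeff n = wCoeff n := by
  rcases n with _ | n
  · simp [conv, wCoeff_zero, bCoeff_zero]
  · have h : innerConv (fun k => (2 * k + 1) * wCoeff k) bCoeff n
        = innerConvDeriv wCoeff bCoeff n := by
      refine Finset.sum_congr rfl fun i _ => ?_
      push_cast
      ring
    rw [conv_succ, h, wCoeff_zero, bCoeff_zero, wCoeff_succ, bCoeff_succ]
    have : (4 * ((n : ℚ) + 1) ^ 2 + 10 * (n + 1) + 6) ≠ 0 := by positivity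
    push_cast
    field_simp
    ring

theorem conv_deriv_self (u : ℕ → ℚ) (n : ℕ) :
    conv (fun k => (2 * k + 2) * u k) u n = (n + 2) * conv u u n := by
  have h : conv (fun k => (2 * k + 2) * u k) u n
      = ∑ i ∈ Finset.range (n + 1), (2 * ((n - i : ℕ) : ℚ) + 2) * (u i * u (n - i)) := by
    rw [conv, ← Finset.sum_range_reflect]
    refine Finset.sum_congr rfl fun i hi => ?_
    have hi' := Finset.mem_range.mp hi
    rw [show n + 1 - 1 - i = n - i by omega, show n - (n - i) = i by omega]
    ring
  have h2 : (2 : ℚ) * conv (fun k => (2 * k + 2) * u k) u n = 2 * ((n + 2) * conv u u n) := by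
    rw [two_mul]
    nth_rewrite 2 [h]
    rw [conv, conv, ← Finset.sum_add_distrib, Finset.mul_sum, Finset.mul_sum]
    refine Finset.sum_congr rfl fun i hi => ?_
    have hi' := Finset.mem_range.mp hi
    rw [Nat.cast_sub (by omega)]
    ring
  linarith

/-- Coefficient form of `B (2 B + 2 s B') = 3 W ^ 2 - B + s B ^ 2 / 3`. -/
theorem conv_deriv_bCoeff (n : ℕ) :
    conv (fun k => (2 * k + 2) * bCoeff k) bCoeff (n + 1) =
      3 * conv wCoeff wCoeff (n + 1) - bCoeff (n + 1) + conv bCoeff bCoeff n / 3 := by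
  rw [conv_deriv_self, conv_succ, conv_succ, wCoeff_zero, bCoeff_zero]
  have h : innerSource n + (n + 3) * innerConv bCoeff bCoeff n
      = 3 * innerConv wCoeff wCoeff n + conv bCoeff bCoeff n / 3 := by
    rw [innerSource]; ring
  have h2 : (2 * (n : ℚ) + 7) * bCoeff (n + 1) - 6 * wCoeff (n + 1) = innerSource n := by
    rw [wCoeff_succ, bCoeff_succ]
    have : (4 * ((n : ℚ) + 1) ^ 2 + 10 * (n + 1) + 6) ≠ 0 := by positivity
    field_simp
    ring
  push_cast
  linarith

theorem sum_inv_sq_le (n : ℕ) : ∑ i ∈ Finset.range n, 1 / ((i : ℚ) + 1) ^ 2 ≤ 2 := by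
  have h : ∀ n : ℕ, ∑ i ∈ Finset.range (n + 1), 1 / ((i : ℚ) + 1) ^ 2 ≤ 2 - 1 / ((n : ℚ) + 1) := by
    intro n
    induction n with
    | zero => norm_num
    | succ n ih =>
      rw [Finset.sum_range_succ]
      have : 1 / (((n + 1 : ℕ) : ℚ) + 1) ^ 2 ≤ 1 / ((n : ℚ) + 1) - 1 / (((n + 1 : ℕ) : ℚ) + 1) := by
        push_cast
        rw [div_sub_div _ _ (by positivity) (by positivity),
          div_le_div_iff₀ (by positivity) (by positivity)]
        nlinarith [(Nat.cast_nonneg n : (0 : ℚ) ≤ n)]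
      linarith
  rcases n with _ | n
  · simp
  · refine (h n).trans ?_
    have : 0 ≤ 1 / ((n : ℚ) + 1) := by positivity
    linarith

theorem sum_inv_sq_reflect_le (n : ℕ) :
    ∑ i ∈ Finset.range n, 1 / ((n - i : ℕ) : ℚ) ^ 2 ≤ 2 := by
  refine le_of_eq_of_le ?_ (sum_inv_sq_le n)
  rw [← Finset.sum_range_reflect]
  refine Finset.sum_congr rfl fun i hi => ?_
  have hi' := Finset.mem_range.mp hi
  rw [show n - (n - 1 - i) = i + 1 by omega]
  push_cast
  rfl

theorem sum_inv_sq_mul_inv_sq_le (n : ℕ) :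
    ∑ i ∈ Finset.range n, 1 / (((i : ℚ) + 1) ^ 2 * ((n - i : ℕ) : ℚ) ^ 2) ≤
      8 / ((n : ℚ) + 1) ^ 2 := by
  calc _ ≤ ∑ i ∈ Finset.range n,
        2 / ((n : ℚ) + 1) ^ 2 * (1 / ((i : ℚ) + 1) ^ 2 + 1 / ((n - i : ℕ) : ℚ) ^ 2) := by
        refine Finset.sum_le_sum fun i hi => ?_
        have hi' := Finset.mem_range.mp hi
        obtain ⟨j, rfl⟩ : ∃ j, n = i + j + 1 := ⟨n - i - 1, by omega⟩
        rw [show i + j + 1 - i = j + 1 by omega]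
        push_cast
        rw [div_add_div _ _ (by positivity) (by positivity), div_mul_div_comm,
          div_le_div_iff₀ (by positivity) (by positivity)]
        have : ((i : ℚ) + j + 1 + 1) ^ 2 ≤ 2 * (((j : ℚ) + 1) ^ 2 + (i + 1) ^ 2) := by
          nlinarith [sq_nonneg ((i : ℚ) - j)]
        have h0 : 0 ≤ ((i : ℚ) + 1) ^ 2 * (j + 1) ^ 2 := by positivity
        nlinarith [mul_le_mul_of_nonneg_left this h0]
    _ ≤ 2 / ((n : ℚ) + 1) ^ 2 * (2 + 2) := by
        rw [← Finset.mul_sum, Finset.sum_add_distrib]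
        gcongr
        · exact sum_inv_sq_le n
        · exact sum_inv_sq_reflect_le n
    _ = _ := by ring

theorem sum_deriv_inv_sq_mul_inv_sq_le (n : ℕ) :
    ∑ i ∈ Finset.range n, (2 * (i : ℚ) + 3) * (1 / (((i : ℚ) + 1) ^ 2 * ((n - i : ℕ) : ℚ) ^ 2))
      ≤ 12 / ((n : ℚ) + 1) := by
  calc _ ≤ ∑ i ∈ Finset.range n,
        3 / ((n : ℚ) + 1) * (1 / 2 * (1 / ((i : ℚ) + 1) ^ 2) + 3 / 2 * (1 / ((n - i : ℕ) : ℚ) ^ 2)) := by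
        refine Finset.sum_le_sum fun i hi => ?_
        have hi' := Finset.mem_range.mp hi
        obtain ⟨j, rfl⟩ : ∃ j, n = i + j + 1 := ⟨n - i - 1, by omega⟩
        rw [show i + j + 1 - i = j + 1 by omega]
        push_cast
        set p : ℚ := (i : ℚ) + 1 with hp
        set r : ℚ := (j : ℚ) + 1 with hr
        have hp1 : 1 ≤ p := by rw [hp]; linarith [(Nat.cast_nonneg i : (0 : ℚ) ≤ i)]
        have hr1 : 1 ≤ r := by rw [hr]; linarith [(Nat.cast_nonneg j : (0 : ℚ) ≤ j)]
        rw [show (2 * (i : ℚ) + 3) = 2 * p + 1 by rw [hp]; ring,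
          show (i : ℚ) + j + 1 + 1 = p + r by rw [hp, hr]; ring]
        have h1 : (2 * p + 1) * (1 / (p ^ 2 * r ^ 2)) ≤ 3 * p * (1 / (p ^ 2 * r ^ 2)) := by
          gcongr
          linarith
        refine h1.trans ?_
        have h2 : 3 / (p + r) * (1 / 2 * (1 / p ^ 2) + 3 / 2 * (1 / r ^ 2)) - 3 * p * (1 / (p ^ 2 * r ^ 2))
            = 3 * (p - r) ^ 2 / (2 * (p + r) * p ^ 2 * r ^ 2) := by
          field_simp
          ring
        have h3 : 0 ≤ 3 * (p - r) ^ 2 / (2 * (p + r) * p ^ 2 * r ^ 2) := by positivity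
        linarith
    _ ≤ 3 / ((n : ℚ) + 1) * (1 / 2 * 2 + 3 / 2 * 2) := by
        rw [← Finset.mul_sum, Finset.sum_add_distrib, ← Finset.mul_sum, ← Finset.mul_sum]
        gcongr
        · exact sum_inv_sq_le n
        · exact sum_inv_sq_reflect_le n
    _ = _ := by ring

theorem coeff_bound_of_lt : ∀ n < 18, 1 ≤ n →
    |wCoeff n| ≤ 2 / 15 / (n ^ 2 * 4 ^ n) ∧ |bCoeff n| ≤ 2 / 15 / (n ^ 2 * 4 ^ n) := by
  decide +kernel

theorem abs_mul_le_of_bound {u v : ℕ → ℚ} {n i : ℕ} (hi : i < n)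
    (hu : |u (i + 1)| ≤ 2 / 15 / ((i + 1 : ℕ) ^ 2 * 4 ^ (i + 1)))
    (hv : |v (n - i)| ≤ 2 / 15 / ((n - i : ℕ) ^ 2 * 4 ^ (n - i))) :
    |u (i + 1) * v (n - i)| ≤
      4 / 225 / 4 ^ (n + 1) * (1 / (((i : ℚ) + 1) ^ 2 * ((n - i : ℕ) : ℚ) ^ 2)) := by
  have hp : (0 : ℚ) < ((n - i : ℕ) : ℚ) := by exact_mod_cast Nat.sub_pos_of_lt hi
  rw [abs_mul]
  refine (mul_le_mul hu hv (abs_nonneg _) (by positivity)).trans (le_of_eq ?_)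
  rw [show (4 : ℚ) ^ (n + 1) = 4 ^ (i + 1) * 4 ^ (n - i) by rw [← pow_add]; congr 1; omega]
  push_cast
  field_simp
  norm_num

theorem abs_innerConv_le {u v : ℕ → ℚ} {n : ℕ}
    (hu : ∀ k ≤ n, 1 ≤ k → |u k| ≤ 2 / 15 / (k ^ 2 * 4 ^ k))
    (hv : ∀ k ≤ n, 1 ≤ k → |v k| ≤ 2 / 15 / (k ^ 2 * 4 ^ k)) :
    |innerConv u v n| ≤ 4 / 225 / 4 ^ (n + 1) * (8 / (n + 1) ^ 2) := by
  calc _ ≤ ∑ i ∈ Finset.range n, |u (i + 1) * v (n - i)| := Finset.abs_sum_le_sum_abs _ _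
    _ ≤ ∑ i ∈ Finset.range n,
        4 / 225 / 4 ^ (n + 1) * (1 / (((i : ℚ) + 1) ^ 2 * ((n - i : ℕ) : ℚ) ^ 2)) := by
        refine Finset.sum_le_sum fun i hi => ?_
        have hi' := Finset.mem_range.mp hi
        exact abs_mul_le_of_bound hi' (hu _ hi' (by omega)) (hv _ (Nat.sub_le _ _) (by omega))
    _ ≤ _ := by
        rw [← Finset.mul_sum]
        gcongr
        exact sum_inv_sq_mul_inv_sq_le n

theorem abs_innerConvDeriv_le {u v : ℕ → ℚ} {n : ℕ}
    (hu : ∀ k ≤ n, 1 ≤ k → |u k| ≤ 2 / 15 / (k ^ 2 * 4 ^ k))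
    (hv : ∀ k ≤ n, 1 ≤ k → |v k| ≤ 2 / 15 / (k ^ 2 * 4 ^ k)) :
    |innerConvDeriv u v n| ≤ 4 / 225 / 4 ^ (n + 1) * (12 / (n + 1)) := by
  calc _ ≤ ∑ i ∈ Finset.range n, |(2 * (i : ℚ) + 3) * (u (i + 1) * v (n - i))| :=
        Finset.abs_sum_le_sum_abs _ _
    _ ≤ ∑ i ∈ Finset.range n, 4 / 225 / 4 ^ (n + 1) *
        ((2 * (i : ℚ) + 3) * (1 / (((i : ℚ) + 1) ^ 2 * ((n - i : ℕ) : ℚ) ^ 2))) := by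
        refine Finset.sum_le_sum fun i hi => ?_
        have hi' := Finset.mem_range.mp hi
        rw [abs_mul, abs_of_nonneg (by positivity : (0 : ℚ) ≤ 2 * i + 3), mul_left_comm]
        gcongr
        exact abs_mul_le_of_bound hi' (hu _ hi' (by omega)) (hv _ (Nat.sub_le _ _) (by omega))
    _ ≤ _ := by
        rw [← Finset.mul_sum]
        gcongr
        exact sum_deriv_inv_sq_mul_inv_sq_le n

theorem abs_conv_bCoeff_le {n : ℕ}
    (hb : ∀ k ≤ n + 1, 1 ≤ k → |bCoeff k| ≤ 2 / 15 / (k ^ 2 * 4 ^ k)) :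
    |conv bCoeff bCoeff (n + 1)| ≤ (2 * (2 / 15) + 8 * (4 / 225)) / (n + 1) ^ 2 / 4 ^ (n + 1) := by
  rw [conv_succ, bCoeff_zero]
  have h1 := hb (n + 1) le_rfl (by omega)
  have h2 := abs_innerConv_le (n := n) (fun k hk => hb k (by omega)) (fun k hk => hb k (by omega))
  have h3 := abs_add_le (1 * bCoeff (n + 1) + bCoeff (n + 1) * 1) (innerConv bCoeff bCoeff n)
  have h4 : |1 * bCoeff (n + 1) + bCoeff (n + 1) * 1| = 2 * |bCoeff (n + 1)| := by
    rw [show 1 * bCoeff (n + 1) + bCoeff (n + 1) * 1 = 2 * bCoeff (n + 1) by ring, abs_mul,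
      abs_of_pos two_pos]
  rw [h4] at h3
  refine h3.trans ((add_le_add (mul_le_mul_of_nonneg_left h1 two_pos.le) h2).trans (le_of_eq ?_))
  push_cast
  field_simp

theorem abs_innerSource_le {n : ℕ} (hn : 17 ≤ n)
    (hw : ∀ k ≤ n, 1 ≤ k → |wCoeff k| ≤ 2 / 15 / (k ^ 2 * 4 ^ k))
    (hb : ∀ k ≤ n, 1 ≤ k → |bCoeff k| ≤ 2 / 15 / (k ^ 2 * 4 ^ k)) :
    |innerSource n| ≤ 2 / 15 / ((n + 1) ^ 2 * 4 ^ (n + 1)) * (10 + 16 / 15 * (n + 1)) := by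
  have h1 := abs_innerConv_le hw hw
  have h2 := abs_innerConv_le hb hb
  obtain ⟨m, rfl⟩ : ∃ m, n = m + 1 := ⟨n - 1, by omega⟩
  have h3 := abs_conv_bCoeff_le hb
  have hm : (16 : ℚ) ≤ m := by exact_mod_cast (by omega : 16 ≤ m)
  have h4 : |innerSource (m + 1)| ≤ 3 * |innerConv wCoeff wCoeff (m + 1)|
      + ((m + 1 : ℕ) + 3) * |innerConv bCoeff bCoeff (m + 1)|
      + |conv bCoeff bCoeff (m + 1)| / 3 := by
    rw [innerSource]
    have hc : (0 : ℚ) ≤ (m + 1 : ℕ) + 3 := by positivity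
    have e1 : |3 * innerConv wCoeff wCoeff (m + 1)| = 3 * |innerConv wCoeff wCoeff (m + 1)| := by
      rw [abs_mul]; norm_num
    have e2 : |((m + 1 : ℕ) + 3) * innerConv bCoeff bCoeff (m + 1)|
        = ((m + 1 : ℕ) + 3) * |innerConv bCoeff bCoeff (m + 1)| := by
      rw [abs_mul, abs_of_nonneg hc]
    have e3 : |conv bCoeff bCoeff (m + 1) / 3| = |conv bCoeff bCoeff (m + 1)| / 3 := by
      rw [abs_div]; norm_num
    rw [← e1, ← e2, ← e3]
    exact (abs_add_le _ _).trans (add_le_add_left (abs_sub _ _) _)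
  have h5 : (2 * (2 / 15) + 8 * (4 / 225)) / ((m : ℚ) + 1) ^ 2 / 4 ^ (m + 1) ≤
      (2 * (2 / 15) + 8 * (4 / 225)) * (9 / 8) * 4 / (m + 2) ^ 2 / 4 ^ (m + 1 + 1) := by
    rw [div_div, div_div, div_le_div_iff₀ (by positivity) (by positivity), pow_succ 4 (m + 1)]
    have : ((m : ℚ) + 2) ^ 2 ≤ 9 / 8 * (m + 1) ^ 2 := by nlinarith
    have hc : (0 : ℚ) ≤ (2 * (2 / 15) + 8 * (4 / 225)) * (4 * 4 ^ (m + 1)) := by positivity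
    nlinarith [mul_le_mul_of_nonneg_left this hc]
  have h6 : ((m + 1 : ℕ) + 3) * |innerConv bCoeff bCoeff (m + 1)| ≤
      ((m + 1 : ℕ) + 3) * (4 / 225 / 4 ^ (m + 1 + 1) * (8 / ((m + 1 : ℕ) + 1) ^ 2)) := by
    gcongr
  have h7 : 3 * (4 / 225 / 4 ^ (m + 1 + 1) * (8 / (((m + 1 : ℕ) : ℚ) + 1) ^ 2))
      + ((m + 1 : ℕ) + 3) * (4 / 225 / 4 ^ (m + 1 + 1) * (8 / ((m + 1 : ℕ) + 1) ^ 2))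
      + ((2 * (2 / 15) + 8 * (4 / 225)) * (9 / 8) * 4 / (m + 2) ^ 2 / 4 ^ (m + 1 + 1)) / 3
      ≤ 2 / 15 / (((m + 1 : ℕ) + 1) ^ 2 * 4 ^ (m + 1 + 1)) * (10 + 16 / 15 * ((m + 1 : ℕ) + 1)) := by
    push_cast
    rw [show (m : ℚ) + 1 + 1 = m + 2 by ring]
    have e : ∀ c : ℚ, c / (m + 2) ^ 2 / 4 ^ (m + 1 + 1)
        = c * (1 / ((m + 2) ^ 2 * 4 ^ (m + 1 + 1))) := fun c => by field_simp
    have e1 : 4 / 225 / 4 ^ (m + 1 + 1) * (8 / ((m : ℚ) + 2) ^ 2)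
        = 32 / 225 * (1 / ((m + 2) ^ 2 * 4 ^ (m + 1 + 1))) := by field_simp; norm_num
    have e2 : 2 / 15 / (((m : ℚ) + 2) ^ 2 * 4 ^ (m + 1 + 1))
        = 2 / 15 * (1 / ((m + 2) ^ 2 * 4 ^ (m + 1 + 1))) := by field_simp
    rw [e, e1, e2]
    have hc : (0 : ℚ) ≤ 1 / ((m + 2) ^ 2 * 4 ^ (m + 1 + 1)) := by positivity
    nlinarith
  linarith

theorem coeff_bound (n : ℕ) (hn : 1 ≤ n) :
    |wCoeff n| ≤ 2 / 15 / (n ^ 2 * 4 ^ n) ∧ |bCoeff n| ≤ 2 / 15 / (n ^ 2 * 4 ^ n) := by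
  induction n using Nat.strong_induction_on with
  | _ n ih =>
    rcases Nat.lt_or_ge n 18 with h | h
    · exact coeff_bound_of_lt n h hn
    obtain ⟨m, rfl⟩ : ∃ m, n = m + 1 := ⟨n - 1, by omega⟩
    have hw : ∀ k ≤ m, 1 ≤ k → |wCoeff k| ≤ 2 / 15 / (k ^ 2 * 4 ^ k) :=
      fun k hk h1 => (ih k (by omega) h1).1
    have hb : ∀ k ≤ m, 1 ≤ k → |bCoeff k| ≤ 2 / 15 / (k ^ 2 * 4 ^ k) :=
      fun k hk h1 => (ih k (by omega) h1).2
    have hR := abs_innerConvDeriv_le hw hb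
    have hS := abs_innerSource_le (by omega) hw hb
    rw [wCoeff_succ, bCoeff_succ]
    have hm : (17 : ℚ) ≤ m := by exact_mod_cast (by omega : 17 ≤ m)
    push_cast
    set N : ℚ := (m : ℚ) + 1 with hN
    have hN18 : 18 ≤ N := by rw [hN]; linarith
    set R := innerConvDeriv wCoeff bCoeff m
    set S := innerSource m
    have hD : 0 < 4 * N ^ 2 + 10 * N + 6 := by positivity
    set y : ℚ := 2 / 15 / (N ^ 2 * 4 ^ (m + 1)) with hy
    have hy0 : 0 < y := by positivity
    have hR' : |R| ≤ y * (8 / 5 * N) := by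
      refine hR.trans (le_of_eq ?_)
      rw [hy]
      field_simp
      norm_num
    obtain ⟨hR1, hR2⟩ := abs_le.mp hR'
    obtain ⟨hS1, hS2⟩ := abs_le.mp hS
    have hNy : 18 * y ≤ N * y := by gcongr
    have hNNy : 18 * (N * y) ≤ N * (N * y) := by gcongr
    have hc : 0 ≤ 2 * N + 5 := by positivity
    have hc2 : 0 ≤ 2 * N := by positivity
    constructor
    · rw [abs_div, abs_of_pos hD, div_le_iff₀ hD, abs_le]
      constructor <;> nlinarith [mul_le_mul_of_nonneg_left hR1 hc, mul_le_mul_of_nonneg_left hR2 hc]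
    · rw [abs_div, abs_of_pos hD, div_le_iff₀ hD, abs_le]
      constructor <;>
        nlinarith [mul_le_mul_of_nonneg_left hS1 hc2, mul_le_mul_of_nonneg_left hS2 hc2]

theorem summable_coeff {a : ℕ → ℝ} {C : ℝ} (ha : ∀ k, |a k| ≤ C / 4 ^ k) (d j : ℕ) :
    Summable fun k => |a k| * ((2 * k + d : ℕ) : ℝ) ^ j * (6 / 5) ^ (2 * k + d) := by
  have h : Summable fun n : ℕ => (n : ℝ) ^ j * (3 / 5 : ℝ) ^ n :=
    summable_pow_mul_geometric_of_norm_lt_one j (by norm_num)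
  have hinj : Function.Injective fun k : ℕ => 2 * k + d := fun x y hxy => by
    simp only at hxy
    omega
  refine Summable.of_nonneg_of_le (fun k => by positivity) (fun k => ?_)
    ((h.comp_injective hinj).mul_left (C * 2 ^ d))
  have e : (6 / 5 : ℝ) ^ (2 * k + d) = 4 ^ k * 2 ^ d * (3 / 5) ^ (2 * k + d) := by
    rw [show (6 / 5 : ℝ) = 2 * (3 / 5) by norm_num, mul_pow, pow_add 2, pow_mul]
    norm_num
  have h4 : |a k| * 4 ^ k ≤ C := by
    have := ha k
    rwa [le_div_iff₀ (by positivity)] at this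
  calc |a k| * ((2 * k + d : ℕ) : ℝ) ^ j * (6 / 5) ^ (2 * k + d)
      = (|a k| * 4 ^ k) * (2 ^ d * (((2 * k + d : ℕ) : ℝ) ^ j * (3 / 5) ^ (2 * k + d))) := by
        rw [e]; ring
    _ ≤ C * (2 ^ d * (((2 * k + d : ℕ) : ℝ) ^ j * (3 / 5) ^ (2 * k + d))) := by gcongr
    _ = _ := by simp only [Function.comp]; ring

/-- The termwise `j`-th derivative of `∑ aₖ x ^ (2 k + d)`. -/
noncomputable def seriesDeriv (a : ℕ → ℝ) (d j : ℕ) (x : ℝ) : ℝ :=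
  ∑' k, a k * ((2 * k + d).descFactorial j : ℝ) * x ^ (2 * k + d - j)

theorem hasDerivAt_seriesDeriv {a : ℕ → ℝ} {C : ℝ} (ha : ∀ k, |a k| ≤ C / 4 ^ k) (d j : ℕ) {x : ℝ}
    (hx : x ∈ Ioo (-(6 / 5) : ℝ) (6 / 5)) :
    HasDerivAt (seriesDeriv a d j) (seriesDeriv a d (j + 1) x) x := by
  have hbound : ∀ j k : ℕ, ∀ y ∈ Ioo (-(6 / 5) : ℝ) (6 / 5),
      ‖a k * ((2 * k + d).descFactorial j : ℝ) * y ^ (2 * k + d - j)‖ ≤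
        |a k| * ((2 * k + d : ℕ) : ℝ) ^ j * (6 / 5) ^ (2 * k + d) := by
    intro j k y hy
    rw [norm_mul, norm_mul, norm_pow, Real.norm_eq_abs, Real.norm_eq_abs, Real.norm_eq_abs,
      Nat.abs_cast]
    have hy' : |y| ≤ 6 / 5 := (abs_lt.mpr hy).le
    have h1 : |y| ^ (2 * k + d - j) ≤ (6 / 5) ^ (2 * k + d) :=
      (pow_le_pow_left₀ (abs_nonneg y) hy' _).trans
        (pow_le_pow_right₀ (by norm_num) (Nat.sub_le _ _))
    have h2 : ((2 * k + d).descFactorial j : ℝ) ≤ ((2 * k + d : ℕ) : ℝ) ^ j := by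
      exact_mod_cast Nat.descFactorial_le_pow _ _
    gcongr
  refine hasDerivAt_tsum_of_isPreconnected (summable_coeff ha d (j + 1)) isOpen_Ioo
    isPreconnected_Ioo (fun k y _ => ?_) (hbound (j + 1)) hx
    (Summable.of_norm_bounded (summable_coeff ha d j) fun k => hbound j k x hx) hx
  have h := (hasDerivAt_pow (2 * k + d - j) y).const_mul
    (a k * ((2 * k + d).descFactorial j : ℝ))
  refine h.congr_deriv ?_
  rw [Nat.descFactorial_succ, Nat.sub_sub]
  push_cast
  ring

theorem contDiffOn_seriesDeriv {a : ℕ → ℝ} {C : ℝ} (ha : ∀ k, |a k| ≤ C / 4 ^ k) (d n j : ℕ) :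
    ContDiffOn ℝ n (seriesDeriv a d j) (Ioo (-(6 / 5) : ℝ) (6 / 5)) := by
  induction n generalizing j with
  | zero =>
    rw [Nat.cast_zero, contDiffOn_zero]
    exact fun x hx => (hasDerivAt_seriesDeriv ha d j hx).continuousAt.continuousWithinAt
  | succ n ih =>
    rw [Nat.cast_succ, contDiffOn_succ_iff_deriv_of_isOpen isOpen_Ioo]
    refine ⟨fun x hx =>
      (hasDerivAt_seriesDeriv ha d j hx).differentiableAt.differentiableWithinAt, ?_,
      (ih (j + 1)).congr fun x hx => (hasDerivAt_seriesDeriv ha d j hx).deriv⟩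
    intro h
    exact absurd h (by simp)

theorem iteratedDeriv_seriesDeriv {a : ℕ → ℝ} {C : ℝ} (ha : ∀ k, |a k| ≤ C / 4 ^ k) (d j : ℕ)
    {x : ℝ} (hx : x ∈ Ioo (-(6 / 5) : ℝ) (6 / 5)) :
    iteratedDeriv j (seriesDeriv a d 0) x = seriesDeriv a d j x := by
  induction j generalizing x with
  | zero => rw [iteratedDeriv_zero]
  | succ j ih =>
    rw [iteratedDeriv_succ, ← (hasDerivAt_seriesDeriv ha d j hx).deriv]
    refine Filter.EventuallyEq.deriv_eq ?_
    filter_upwards [isOpen_Ioo.mem_nhds hx] with y hy using ih hy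

theorem tsum_mul_tsum_eq_conv (u v : ℕ → ℚ) (s : ℝ)
    (hu : Summable fun k => |(u k : ℝ) * s ^ k|) (hv : Summable fun k => |(v k : ℝ) * s ^ k|) :
    (∑' k, (u k : ℝ) * s ^ k) * ∑' k, (v k : ℝ) * s ^ k = ∑' k, (conv u v k : ℝ) * s ^ k := by
  rw [tsum_mul_tsum_eq_tsum_sum_range_of_summable_norm (f := fun k => (u k : ℝ) * s ^ k)
    (g := fun k => (v k : ℝ) * s ^ k) hu hv]
  refine tsum_congr fun n => ?_
  rw [conv, Rat.cast_sum, Finset.sum_mul]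
  refine Finset.sum_congr rfl fun i hi => ?_
  have hi' := Finset.mem_range.mp hi
  have e : s ^ n = s ^ i * s ^ (n - i) := (pow_mul_pow_sub s (by omega)).symm
  rw [e]
  push_cast
  ring

theorem summable_conv (u v : ℕ → ℚ) (s : ℝ)
    (hu : Summable fun k => |(u k : ℝ) * s ^ k|) (hv : Summable fun k => |(v k : ℝ) * s ^ k|) :
    Summable fun k => (conv u v k : ℝ) * s ^ k := by
  refine (summable_norm_sum_mul_range_of_summable_norm (f := fun k => (u k : ℝ) * s ^ k)
    (g := fun k => (v k : ℝ) * s ^ k) hu hv).of_norm.congr fun n => ?_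
  rw [conv, Rat.cast_sum, Finset.sum_mul]
  refine Finset.sum_congr rfl fun i hi => ?_
  have hi' := Finset.mem_range.mp hi
  have e : s ^ n = s ^ i * s ^ (n - i) := (pow_mul_pow_sub s (by omega)).symm
  rw [e]
  push_cast
  ring

theorem abs_le_of_coeff_bound {u : ℕ → ℚ} (h0 : u 0 = 1)
    (hu : ∀ n, 1 ≤ n → |u n| ≤ 2 / 15 / (n ^ 2 * 4 ^ n)) (k : ℕ) : |(u k : ℝ)| ≤ 1 / 4 ^ k := by
  rcases Nat.eq_zero_or_pos k with rfl | hk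
  · simp [h0]
  · have h : |u k| ≤ 1 / 4 ^ k := by
      refine (hu k hk).trans ?_
      have hk' : (1 : ℚ) ≤ k := by exact_mod_cast hk
      rw [div_div, div_le_div_iff₀ (by positivity) (by positivity)]
      have : (1 : ℚ) ≤ k ^ 2 := one_le_pow₀ hk'
      have h4 : (0 : ℚ) < 4 ^ k := by positivity
      nlinarith
    have h' := (Rat.cast_le (K := ℝ)).mpr h
    push_cast at h'
    exact h'

theorem abs_wCoeff_le (k : ℕ) : |(wCoeff k : ℝ)| ≤ 1 / 4 ^ k :=
  abs_le_of_coeff_bound wCoeff_zero (fun n hn => (coeff_bound n hn).1) k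

theorem abs_bCoeff_le (k : ℕ) : |(bCoeff k : ℝ)| ≤ 1 / 4 ^ k :=
  abs_le_of_coeff_bound bCoeff_zero (fun n hn => (coeff_bound n hn).2) k

theorem summable_linear_mul {u : ℕ → ℚ} (hu : ∀ k, |(u k : ℝ)| ≤ 1 / 4 ^ k) {x : ℝ}
    (hx : x ∈ Ico (0 : ℝ) (6 / 5)) (d j : ℕ) :
    Summable fun k => |((((2 * k + d : ℕ) : ℚ) ^ j * u k : ℚ) : ℝ) * (x ^ 2) ^ k| := by
  refine Summable.of_nonneg_of_le (fun k => abs_nonneg _) (fun k => ?_) (summable_coeff hu d j)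
  have hx2 : (x ^ 2) ^ k ≤ (6 / 5) ^ (2 * k + d) := by
    rw [← pow_mul]
    exact (pow_le_pow_left₀ hx.1 hx.2.le _).trans
      (pow_le_pow_right₀ (by norm_num) (Nat.le_add_right _ _))
  have hx0 : 0 ≤ x := hx.1
  rw [abs_mul, abs_of_nonneg (by positivity : 0 ≤ (x ^ 2) ^ k)]
  push_cast
  rw [abs_mul, abs_of_nonneg (by positivity : (0 : ℝ) ≤ (2 * (k : ℝ) + d) ^ j),
    mul_comm _ |(u k : ℝ)|]
  gcongr

/-- A power series solving the same equation as the inverse of `xfun`. -/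
noncomputable def tSeries : ℝ → ℝ := seriesDeriv (fun k => wCoeff k) 1 0

/-- The power series of `3 (1 - t cot t)` as a function of `x`. -/
noncomputable def cotSeries : ℝ → ℝ := seriesDeriv (fun k => bCoeff k) 2 0

/-- The power series with coefficients `u` evaluated at `x²`. -/
noncomputable def evalSq (u : ℕ → ℚ) (x : ℝ) : ℝ := ∑' k, (u k : ℝ) * (x ^ 2) ^ k

theorem tSeries_eq (x : ℝ) : tSeries x = x * evalSq wCoeff x := by
  rw [tSeries, seriesDeriv, evalSq, ← tsum_mul_left]
  refine tsum_congr fun k => ?_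
  simp only [Nat.descFactorial_zero, Nat.sub_zero, Nat.cast_one, pow_succ, pow_mul]
  ring

theorem seriesDeriv_wCoeff_one (x : ℝ) : seriesDeriv (fun k => wCoeff k) 1 1 x =
    evalSq (fun k => (2 * k + 1) * wCoeff k) x := by
  rw [seriesDeriv, evalSq]
  refine tsum_congr fun k => ?_
  simp only [Nat.descFactorial_one, Nat.add_sub_cancel, pow_mul]
  push_cast
  ring

theorem cotSeries_eq (x : ℝ) : cotSeries x = x ^ 2 * evalSq bCoeff x := by
  rw [cotSeries, seriesDeriv, evalSq, ← tsum_mul_left]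
  refine tsum_congr fun k => ?_
  simp only [Nat.descFactorial_zero, Nat.sub_zero, Nat.cast_one, pow_add, pow_mul]
  ring

theorem seriesDeriv_bCoeff_one (x : ℝ) : seriesDeriv (fun k => bCoeff k) 2 1 x =
    x * evalSq (fun k => (2 * k + 2) * bCoeff k) x := by
  rw [seriesDeriv, evalSq, ← tsum_mul_left]
  refine tsum_congr fun k => ?_
  rw [show 2 * k + 2 - 1 = 2 * k + 1 by omega]
  simp only [Nat.descFactorial_one, pow_succ, pow_mul]
  push_cast
  ring

theorem summable_evalSq {u : ℕ → ℚ} (hu : ∀ k, |(u k : ℝ)| ≤ 1 / 4 ^ k) {x : ℝ}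
    (hx : x ∈ Ico (0 : ℝ) (6 / 5)) : Summable fun k => |(u k : ℝ) * (x ^ 2) ^ k| := by
  simpa using summable_linear_mul hu hx 0 0

theorem evalSq_bCoeff_mul_deriv {x : ℝ} (hx : x ∈ Ico (0 : ℝ) (6 / 5)) :
    evalSq bCoeff x * evalSq (fun k => (2 * k + 1) * wCoeff k) x = evalSq wCoeff x := by
  rw [mul_comm, evalSq, evalSq, tsum_mul_tsum_eq_conv, evalSq]
  · exact tsum_congr fun k => by rw [conv_deriv_wCoeff]
  · simpa using summable_linear_mul abs_wCoeff_le hx 1 1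
  · exact summable_evalSq abs_bCoeff_le hx

theorem evalSq_bCoeff_mul_deriv_self {x : ℝ} (hx : x ∈ Ico (0 : ℝ) (6 / 5)) :
    evalSq bCoeff x * evalSq (fun k => (2 * k + 2) * bCoeff k) x =
      3 * evalSq wCoeff x ^ 2 - evalSq bCoeff x + x ^ 2 * evalSq bCoeff x ^ 2 / 3 := by
  have sw := summable_evalSq abs_wCoeff_le hx
  have sb := summable_evalSq abs_bCoeff_le hx
  have sd : Summable fun k => |(((2 * k + 2) * bCoeff k : ℚ) : ℝ) * (x ^ 2) ^ k| := by
    simpa using summable_linear_mul abs_bCoeff_le hx 2 1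
  have sww := summable_conv _ _ _ sw sw
  have sbb := summable_conv _ _ _ sb sb
  have sdb := summable_conv (fun k => (2 * k + 2) * bCoeff k) _ _ sd sb
  have eww : evalSq wCoeff x ^ 2 = ∑' k, (conv wCoeff wCoeff k : ℝ) * (x ^ 2) ^ k := by
    rw [sq, evalSq, tsum_mul_tsum_eq_conv _ _ _ sw sw]
  have ebb : evalSq bCoeff x ^ 2 = ∑' k, (conv bCoeff bCoeff k : ℝ) * (x ^ 2) ^ k := by
    rw [sq, evalSq, tsum_mul_tsum_eq_conv _ _ _ sb sb]
  rw [mul_comm]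
  nth_rewrite 1 [evalSq]
  nth_rewrite 1 [evalSq]
  rw [tsum_mul_tsum_eq_conv (fun k => (2 * k + 2) * bCoeff k) _ _ sd sb, eww, ebb, evalSq,
    sdb.tsum_eq_zero_add, sww.tsum_eq_zero_add, sb.of_abs.tsum_eq_zero_add]
  have key : ∑' k, (conv (fun k => (2 * k + 2) * bCoeff k) bCoeff (k + 1) : ℝ) * (x ^ 2) ^ (k + 1) =
      3 * ∑' k, (conv wCoeff wCoeff (k + 1) : ℝ) * (x ^ 2) ^ (k + 1)
      - ∑' k, (bCoeff (k + 1) : ℝ) * (x ^ 2) ^ (k + 1)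
      + x ^ 2 * (∑' k, (conv bCoeff bCoeff k : ℝ) * (x ^ 2) ^ k) / 3 := by
    have s1 := ((summable_nat_add_iff 1).mpr sww).mul_left 3
    have s2 := (summable_nat_add_iff 1).mpr sb.of_abs
    have s3 := sbb.mul_left (x ^ 2 / 3)
    rw [show x ^ 2 * (∑' k, (conv bCoeff bCoeff k : ℝ) * (x ^ 2) ^ k) / 3
      = x ^ 2 / 3 * ∑' k, (conv bCoeff bCoeff k : ℝ) * (x ^ 2) ^ k by ring,
      ← tsum_mul_left, ← tsum_mul_left, ← s1.tsum_sub s2, ← (s1.sub s2).tsum_add s3]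
    refine tsum_congr fun k => ?_
    rw [conv_deriv_bCoeff]
    push_cast
    ring
  rw [key]
  simp [conv, wCoeff_zero, bCoeff_zero]
  ring

theorem evalSq_pos {u : ℕ → ℚ} (h0 : u 0 = 1)
    (hu : ∀ n, 1 ≤ n → |u n| ≤ 2 / 15 / (n ^ 2 * 4 ^ n)) {x : ℝ}
    (hx : x ∈ Ico (0 : ℝ) (6 / 5)) : 0 < evalSq u x := by
  have s := (summable_evalSq (abs_le_of_coeff_bound h0 hu) hx).of_abs
  rw [evalSq, s.tsum_eq_zero_add]
  have hg : HasSum (fun k : ℕ => 1 / 20 * (9 / 25 : ℝ) ^ k) (1 / 20 * (1 - 9 / 25)⁻¹) :=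
    (hasSum_geometric_of_lt_one (by norm_num) (by norm_num)).mul_left _
  have h := tsum_of_norm_bounded (f := fun k => (u (k + 1) : ℝ) * (x ^ 2) ^ (k + 1)) hg
    fun k => by
      have h1 : |u (k + 1)| ≤ 2 / 15 / 4 ^ (k + 1) := by
        refine (hu (k + 1) (by omega)).trans ?_
        gcongr
        have : (1 : ℚ) ≤ ((k + 1 : ℕ) : ℚ) ^ 2 := one_le_pow₀ (by simp)
        have h4 : (0 : ℚ) < 4 ^ (k + 1) := by positivity
        nlinarith
      have h1' : |(u (k + 1) : ℝ)| ≤ 2 / 15 / 4 ^ (k + 1) := by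
        have h1' := (Rat.cast_le (K := ℝ)).mpr h1
        push_cast at h1'
        exact h1'
      have h2 : x ^ 2 ≤ 36 / 25 := by nlinarith [hx.1, hx.2]
      rw [norm_mul, Real.norm_eq_abs, norm_pow, Real.norm_of_nonneg (sq_nonneg x)]
      calc |(u (k + 1) : ℝ)| * (x ^ 2) ^ (k + 1)
          ≤ 2 / 15 / 4 ^ (k + 1) * (36 / 25) ^ (k + 1) := by gcongr
        _ = 2 / 15 * (9 / 25) * (9 / 25) ^ k := by
          rw [show (36 / 25 : ℝ) = 4 * (9 / 25) by norm_num, mul_pow, pow_succ (9 / 25 : ℝ)]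
          field_simp
        _ ≤ 1 / 20 * (9 / 25) ^ k := by gcongr; norm_num
  rw [Real.norm_eq_abs] at h
  have := (abs_le.mp h).1
  simp only [h0, Rat.cast_one, pow_zero, mul_one]
  norm_num at this
  linarith

theorem tSeries_pos {x : ℝ} (hx : x ∈ Ioo (0 : ℝ) (6 / 5)) : 0 < tSeries x := by
  rw [tSeries_eq]
  exact mul_pos hx.1 (evalSq_pos wCoeff_zero (fun n hn => (coeff_bound n hn).1) ⟨hx.1.le, hx.2⟩)

theorem cotSeries_pos {x : ℝ} (hx : x ∈ Ioo (0 : ℝ) (6 / 5)) : 0 < cotSeries x := by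
  rw [cotSeries_eq]
  exact mul_pos (pow_pos hx.1 2)
    (evalSq_pos bCoeff_zero (fun n hn => (coeff_bound n hn).2) ⟨hx.1.le, hx.2⟩)

theorem hasDerivAt_tSeries {x : ℝ} (hx : x ∈ Ioo (-(6 / 5) : ℝ) (6 / 5)) :
    HasDerivAt tSeries (deriv tSeries x) x :=
  (hasDerivAt_seriesDeriv abs_wCoeff_le 1 0 hx).differentiableAt.hasDerivAt

theorem hasDerivAt_cotSeries {x : ℝ} (hx : x ∈ Ioo (-(6 / 5) : ℝ) (6 / 5)) :
    HasDerivAt cotSeries (deriv cotSeries x) x :=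
  (hasDerivAt_seriesDeriv abs_bCoeff_le 2 0 hx).differentiableAt.hasDerivAt

theorem cotSeries_mul_deriv_tSeries {x : ℝ} (hx : x ∈ Ico (0 : ℝ) (6 / 5)) :
    cotSeries x * deriv tSeries x = x * tSeries x := by
  have h : deriv tSeries x = evalSq (fun k => (2 * k + 1) * wCoeff k) x := by
    rw [← seriesDeriv_wCoeff_one]
    exact (hasDerivAt_seriesDeriv abs_wCoeff_le 1 0 ⟨by linarith [hx.1], hx.2⟩).deriv
  rw [h, cotSeries_eq, tSeries_eq, ← evalSq_bCoeff_mul_deriv hx]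
  ring

theorem cotSeries_mul_deriv_self {x : ℝ} (hx : x ∈ Ico (0 : ℝ) (6 / 5)) :
    cotSeries x * deriv cotSeries x =
      x * (3 * tSeries x ^ 2 - cotSeries x + cotSeries x ^ 2 / 3) := by
  have h : deriv cotSeries x = x * evalSq (fun k => (2 * k + 2) * bCoeff k) x := by
    rw [← seriesDeriv_bCoeff_one]
    exact (hasDerivAt_seriesDeriv abs_bCoeff_le 2 0 ⟨by linarith [hx.1], hx.2⟩).deriv
  rw [h, cotSeries_eq, tSeries_eq]
  linear_combination x ^ 3 * evalSq_bCoeff_mul_deriv_self hx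

theorem tSeries_mul_deriv {x : ℝ} (hx : x ∈ Ioo (0 : ℝ) (6 / 5)) :
    tSeries x * deriv tSeries x =
      deriv cotSeries x / 3 + x / 3 * (1 - cotSeries x / 3) := by
  have hx' : x ∈ Ico (0 : ℝ) (6 / 5) := ⟨hx.1.le, hx.2⟩
  refine mul_left_cancel₀ (cotSeries_pos hx).ne' ?_
  linear_combination tSeries x * cotSeries_mul_deriv_tSeries hx' - cotSeries_mul_deriv_self hx' / 3

theorem eq_of_hasDerivAt_zero {f : ℝ → ℝ} {x : ℝ} (hx : 0 < x) (hc : ContinuousOn f (Icc 0 x))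
    (hd : ∀ y ∈ Ioo 0 x, HasDerivAt f 0 y) : f x = f 0 := by
  obtain ⟨c, -, h⟩ := exists_hasDerivAt_eq_slope f (fun _ => 0) hx hc hd
  rw [eq_comm, div_eq_zero_iff] at h
  rcases h with h | h <;> linarith

theorem continuousOn_tSeries : ContinuousOn tSeries (Ioo (-(6 / 5)) (6 / 5)) :=
  fun _ hy => (hasDerivAt_tSeries hy).continuousAt.continuousWithinAt

theorem continuousOn_cotSeries : ContinuousOn cotSeries (Ioo (-(6 / 5)) (6 / 5)) :=
  fun _ hy => (hasDerivAt_cotSeries hy).continuousAt.continuousWithinAt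

theorem tSeries_zero : tSeries 0 = 0 := by rw [tSeries_eq, zero_mul]

theorem tSeries_mul_cos {x : ℝ} (hx : x ∈ Ioo (0 : ℝ) (6 / 5)) :
    tSeries x * cos (tSeries x) = (1 - cotSeries x / 3) * sin (tSeries x) := by
  have hsub : Icc 0 x ⊆ Ioo (-(6 / 5) : ℝ) (6 / 5) :=
    fun y hy => ⟨by linarith [hy.1], hy.2.trans_lt hx.2⟩
  have ht := continuousOn_tSeries.mono hsub
  have hg := continuousOn_cotSeries.mono hsub
  have h := eq_of_hasDerivAt_zero
    (f := fun y => ((1 - cotSeries y / 3) * sin (tSeries y) - tSeries y * cos (tSeries y)) *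
      exp (-(y ^ 2) / 6)) hx.1
    ((((continuousOn_const.sub (hg.div_const 3)).mul (continuous_sin.comp_continuousOn ht)).sub
      (ht.mul (continuous_cos.comp_continuousOn ht))).mul (by fun_prop))
    fun y hy => by
      have hy1 : y ∈ Ioo (0 : ℝ) (6 / 5) := ⟨hy.1, hy.2.trans hx.2⟩
      have hy2 : y ∈ Ioo (-(6 / 5) : ℝ) (6 / 5) := hsub ⟨hy.1.le, hy.2.le⟩
      have dt := hasDerivAt_tSeries hy2
      have dg := hasDerivAt_cotSeries hy2
      have de : HasDerivAt (fun y : ℝ => exp (-(y ^ 2) / 6)) (exp (-(y ^ 2) / 6) * (-(y / 3))) y := by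
        refine HasDerivAt.exp ?_
        refine (((hasDerivAt_pow 2 y).neg).div_const 6).congr_deriv ?_
        push_cast
        ring
      refine (((((dg.div_const 3).const_sub 1).mul dt.sin).sub (dt.mul dt.cos)).mul de).congr_deriv ?_
      have e1 := tSeries_mul_deriv hy1
      have e2 := cotSeries_mul_deriv_tSeries ⟨hy1.1.le, hy1.2⟩
      simp only [Pi.sub_apply, Pi.mul_apply]
      linear_combination (exp (-(y ^ 2) / 6) * sin (tSeries y)) * e1
        - exp (-(y ^ 2) / 6) * cos (tSeries y) / 3 * e2
  simp only [tSeries_zero, sin_zero, mul_zero, zero_mul, sub_zero] at h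
  have := (mul_eq_zero.mp h).resolve_right (exp_pos _).ne'
  linarith

theorem sinc_tSeries {x : ℝ} (hx : x ∈ Ioo (0 : ℝ) (6 / 5)) :
    sinc (tSeries x) = exp (-(x ^ 2) / 6) := by
  have hsub : Icc 0 x ⊆ Ioo (-(6 / 5) : ℝ) (6 / 5) :=
    fun y hy => ⟨by linarith [hy.1], hy.2.trans_lt hx.2⟩
  have ht := continuousOn_tSeries.mono hsub
  have h := eq_of_hasDerivAt_zero (f := fun y => sinc (tSeries y) * exp (y ^ 2 / 6)) hx.1
    ((continuous_sinc.comp_continuousOn ht).mul (by fun_prop))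
    fun y hy => by
      have hy1 : y ∈ Ioo (0 : ℝ) (6 / 5) := ⟨hy.1, hy.2.trans hx.2⟩
      have hy2 : y ∈ Ioo (-(6 / 5) : ℝ) (6 / 5) := hsub ⟨hy.1.le, hy.2.le⟩
      have hpos := tSeries_pos hy1
      have dt := hasDerivAt_tSeries hy2
      have de : HasDerivAt (fun y : ℝ => exp (y ^ 2 / 6)) (exp (y ^ 2 / 6) * (y / 3)) y := by
        refine HasDerivAt.exp ?_
        refine ((hasDerivAt_pow 2 y).div_const 6).congr_deriv ?_
        push_cast
        ring
      have d := ((dt.sin.div dt hpos.ne').mul de)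
      have heq : (fun y => sinc (tSeries y) * exp (y ^ 2 / 6)) =ᶠ[nhds y]
          (fun y => sin (tSeries y) / tSeries y * exp (y ^ 2 / 6)) := by
        filter_upwards [dt.continuousAt.eventually_ne hpos.ne'] with z hz
        rw [sinc_of_ne_zero hz]
      refine (d.congr_of_eventuallyEq heq).congr_deriv ?_
      have e1 := tSeries_mul_cos hy1
      have e2 := cotSeries_mul_deriv_tSeries ⟨hy1.1.le, hy1.2⟩
      simp only [Pi.div_apply]
      field_simp
      linear_combination exp (y ^ 2 / 6) * (3 * deriv tSeries y * e1 - sin (tSeries y) * e2)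
  simp only [tSeries_zero, sinc_zero] at h
  rw [show -(x ^ 2) / 6 = -(x ^ 2 / 6) by ring, exp_neg]
  refine eq_inv_of_mul_eq_one_left ?_
  rw [h]
  norm_num

theorem xfun_tSeries {x : ℝ} (hx : x ∈ Ico (0 : ℝ) (6 / 5)) : xfun (tSeries x) = x := by
  rcases hx.1.eq_or_lt with rfl | h0
  · simp [tSeries_zero, xfun]
  · have h := sinc_tSeries ⟨h0, hx.2⟩
    rw [sinc_apply] at h
    rw [xfun, h, log_exp, show -6 * (-(x ^ 2) / 6) = x ^ 2 by ring, sqrt_sq hx.1]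

theorem sin_ge : 0.8892 ≤ sin 1.1 := by
  have h1 : 0.522 ≤ sin 0.55 := by
    have := sin_ge_sub_cube (x := 0.55) (by norm_num)
    norm_num at this ⊢
    linarith
  have h2 : 0.852 ≤ cos 0.55 := by
    have h3 : sin 0.275 ≤ 0.272 := by
      have := (abs_le.mp (sin_bound (x := 0.275) (by norm_num [abs_le]))).2
      rw [abs_of_pos (by norm_num)] at this
      norm_num at this ⊢
      linarith
    have h4 : 0 ≤ sin 0.275 := by
      have := sin_ge_sub_cube (x := 0.275) (by norm_num)
      norm_num at this ⊢
      linarith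
    rw [show (0.55 : ℝ) = 2 * 0.275 by norm_num, cos_two_mul, cos_sq']
    nlinarith
  rw [show (1.1 : ℝ) = 2 * 0.55 by norm_num, sin_two_mul]
  nlinarith

theorem xfun_sq_le : xfun 1.1 ^ 2 ≤ 1.28 := by
  have hs := sin_ge
  have hr : 0.8083 ≤ sin 1.1 / 1.1 := by
    rw [le_div_iff₀ (by norm_num)]
    linarith
  have hlog : -(1.28 / 6) ≤ log (sin 1.1 / 1.1) := by
    rw [le_log_iff_exp_le (by linarith), exp_neg]
    refine le_trans ?_ hr
    have h : 1.2372 ≤ exp (1.28 / 6) := by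
      refine le_trans ?_ (Real.sum_le_exp_of_nonneg (by norm_num : (0 : ℝ) ≤ 1.28 / 6) 4)
      norm_num [Finset.sum_range_succ, Nat.factorial]
    refine (inv_anti₀ (by norm_num) h).trans (by norm_num)
  rw [xfun, if_neg (by norm_num)]
  rcases le_total 0 (-6 * log (sin 1.1 / 1.1)) with h | h
  · rw [sq_sqrt h]
    linarith
  · rw [sqrt_eq_zero_of_nonpos h]
    norm_num

theorem xfun_pos : 0 < xfun 1.1 := by
  rw [xfun, if_neg (by norm_num), sqrt_pos]
  have h1 : sin 1.1 / 1.1 < 1 := by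
    rw [div_lt_one (by norm_num)]
    exact sin_lt (by norm_num)
  have h2 : 0 < sin 1.1 / 1.1 := div_pos (by linarith [sin_ge]) (by norm_num)
  linarith [log_neg h2 h1]

theorem finite_sum_le :
    ∑ k ∈ Finset.range 18, |wCoeff k| * ((2 * k + 1).descFactorial 7 : ℚ) * (32 / 25) ^ (k - 3)
      ≤ 1 / 10 := by
  decide +kernel

theorem descFactorial_seven_add_two (n : ℕ) :
    (n + 2).descFactorial 7 = (n + 2) * ((n + 1) * n.descFactorial 5) := by
  rw [Nat.succ_descFactorial_succ, Nat.succ_descFactorial_succ]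

theorem descFactorial_seven (n : ℕ) :
    n.descFactorial 7 = (n - 6) * ((n - 5) * n.descFactorial 5) := by
  rw [Nat.descFactorial_succ, Nat.descFactorial_succ]

theorem descFactorial_seven_le (i : ℕ) :
    ((2 * (i + 18) + 1).descFactorial 7 : ℝ) * (8 / 25) ^ (i + 18) ≤ 70 * (1 / 2) ^ i := by
  induction i with
  | zero =>
    norm_num [Nat.descFactorial]
  | succ i ih =>
    have e1 : ((2 * (i + 1 + 18) + 1).descFactorial 7 : ℝ)
        = (2 * i + 39) * (2 * i + 38) * ((2 * (i + 18) + 1).descFactorial 5 : ℝ) := by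
      rw [show 2 * (i + 1 + 18) + 1 = 2 * (i + 18) + 1 + 2 by ring, descFactorial_seven_add_two]
      push_cast
      ring
    have e2 : ((2 * (i + 18) + 1).descFactorial 7 : ℝ)
        = (2 * i + 31) * (2 * i + 32) * ((2 * (i + 18) + 1).descFactorial 5 : ℝ) := by
      rw [descFactorial_seven,
        show 2 * (i + 18) + 1 - 6 = 2 * i + 31 by omega,
        show 2 * (i + 18) + 1 - 5 = 2 * i + 32 by omega]
      push_cast
      ring
    have hi : (0 : ℝ) ≤ i := Nat.cast_nonneg i
    have hq : (2 * (i : ℝ) + 39) * (2 * i + 38) * (8 / 25)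
        ≤ 1 / 2 * ((2 * i + 31) * (2 * i + 32)) := by nlinarith
    have step : ∀ A B D p : ℝ, A = (2 * i + 39) * (2 * i + 38) * D →
        B = (2 * i + 31) * (2 * i + 32) * D → 0 ≤ D → 0 ≤ p → B * p ≤ 70 * (1 / 2) ^ i →
        A * (p * (8 / 25)) ≤ 70 * (1 / 2) ^ (i + 1) := by
      rintro A B D p rfl rfl hD hp h
      rw [pow_succ]
      linarith [mul_le_mul_of_nonneg_right hq (mul_nonneg hD hp)]
    rw [show (8 / 25 : ℝ) ^ (i + 1 + 18) = (8 / 25) ^ (i + 18) * (8 / 25) by ring]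
    exact step _ _ _ _ e1 e2 (Nat.cast_nonneg _) (by positivity) ih

theorem abs_seventh_term_le {y : ℝ} (hy0 : 0 ≤ y) (hy : y ^ 2 ≤ 32 / 25) (k : ℕ) :
    |(wCoeff k : ℝ) * ((2 * k + 1).descFactorial 7 : ℝ) * y ^ (2 * k + 1 - 7)| ≤
      |(wCoeff k : ℝ)| * ((2 * k + 1).descFactorial 7 : ℝ) * (32 / 25) ^ (k - 3) := by
  rcases Nat.lt_or_ge k 3 with hk | hk
  · rw [Nat.descFactorial_of_lt (by omega)]
    simp
  · rw [abs_mul, abs_mul, Nat.abs_cast, abs_of_nonneg (pow_nonneg hy0 _),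
      show 2 * k + 1 - 7 = 2 * (k - 3) by omega, pow_mul]
    gcongr

theorem seventh_tail_le (i : ℕ) :
    |(wCoeff (i + 18) : ℝ)| * ((2 * (i + 18) + 1).descFactorial 7 : ℝ) * (32 / 25) ^ (i + 18 - 3)
      ≤ 1 / 10 * (1 / 2) ^ i := by
  have h1 : |wCoeff (i + 18)| ≤ 1 / 2430 / 4 ^ (i + 18) := by
    refine (coeff_bound (i + 18) (by omega)).1.trans ?_
    rw [div_div, div_div, div_le_div_iff₀ (by positivity) (by positivity)]
    have : (324 : ℚ) ≤ ((i + 18 : ℕ) : ℚ) ^ 2 := by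
      push_cast
      nlinarith [(Nat.cast_nonneg i : (0 : ℚ) ≤ i)]
    have h4 : (0 : ℚ) < 4 ^ (i + 18) := by positivity
    nlinarith
  have h1' : |(wCoeff (i + 18) : ℝ)| ≤ 1 / 2430 / 4 ^ (i + 18) := by
    have h1' := (Rat.cast_le (K := ℝ)).mpr h1
    push_cast at h1'
    exact h1'
  have h2 : (32 / 25 : ℝ) ^ (i + 18 - 3) ≤ 4 ^ (i + 18) * (8 / 25) ^ (i + 18) := by
    rw [← mul_pow]
    norm_num only
    exact pow_le_pow_right₀ (by norm_num) (Nat.sub_le _ _)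
  calc _ ≤ 1 / 2430 / 4 ^ (i + 18) * ((2 * (i + 18) + 1).descFactorial 7 : ℝ) *
        (4 ^ (i + 18) * (8 / 25) ^ (i + 18)) := by gcongr
    _ = 1 / 2430 * (((2 * (i + 18) + 1).descFactorial 7 : ℝ) * (8 / 25) ^ (i + 18)) := by
        field_simp
    _ ≤ 1 / 2430 * (70 * (1 / 2) ^ i) := by
        exact mul_le_mul_of_nonneg_left (descFactorial_seven_le i) (by norm_num)
    _ ≤ 1 / 10 * (1 / 2) ^ i := by
        have : (0 : ℝ) < (1 / 2) ^ i := by positivity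
        linarith

theorem abs_seriesDeriv_seven_le {y : ℝ} (hy0 : 0 ≤ y) (hy : y ^ 2 ≤ 32 / 25) :
    |seriesDeriv (fun k => wCoeff k) 1 7 y| ≤ 0.50344 := by
  set M : ℕ → ℝ := fun k =>
    |(wCoeff k : ℝ)| * ((2 * k + 1).descFactorial 7 : ℝ) * (32 / 25) ^ (k - 3) with hM
  have hgeo : Summable fun i : ℕ => 1 / 10 * (1 / 2 : ℝ) ^ i := summable_geometric_two.mul_left _
  have htail : Summable fun i => M (i + 18) :=
    Summable.of_nonneg_of_le (fun i => by positivity) seventh_tail_le hgeo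
  have hsum : Summable M := (summable_nat_add_iff 18).mp htail
  have h : |seriesDeriv (fun k => wCoeff k) 1 7 y| ≤ ∑' k, M k := by
    rw [← Real.norm_eq_abs, seriesDeriv]
    exact tsum_of_norm_bounded hsum.hasSum fun k => abs_seventh_term_le hy0 hy k
  refine h.trans ?_
  rw [← hsum.sum_add_tsum_nat_add 18]
  have h1 : ∑ k ∈ Finset.range 18, M k ≤ 1 / 10 := by
    have h1 := (Rat.cast_le (K := ℝ)).mpr finite_sum_le
    push_cast at h1
    exact h1
  have h2 : ∑' i, M (i + 18) ≤ 1 / 10 * 2 := by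
    rw [← tsum_geometric_two, ← tsum_mul_left]
    exact htail.tsum_le_tsum seventh_tail_le hgeo
  norm_num
  linarith

/-- If `tf` is the inverse of `x(t)` on `[0, 1.1]`, then `tf` is seven times
differentiable on `[0, x(1.1)]` and its seventh derivative is bounded by `0.50344`. -/
theorem inverse_seventh_deriv_bound (tf : ℝ → ℝ)
    (hmaps : MapsTo tf (Icc 0 (xfun 1.1)) (Icc (0 : ℝ) 1.1))
    (hleft : ∀ t ∈ Icc (0 : ℝ) 1.1, tf (xfun t) = t)
    (hright : ∀ y ∈ Icc 0 (xfun 1.1), xfun (tf y) = y) :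
    ContDiffOn ℝ 7 tf (Icc 0 (xfun 1.1)) ∧
    ∀ y ∈ Icc 0 (xfun 1.1),
      |iteratedDerivWithin 7 tf (Icc 0 (xfun 1.1)) y| ≤ 0.50344 := by
  have hX := xfun_sq_le
  have hX0 := xfun_pos
  have hX1 : xfun 1.1 < 6 / 5 := by nlinarith
  have hsub : Icc 0 (xfun 1.1) ⊆ Ioo (-(6 / 5) : ℝ) (6 / 5) :=
    fun y hy => ⟨by linarith [hy.1], hy.2.trans_lt hX1⟩
  have heq : EqOn tf tSeries (Icc 0 (xfun 1.1)) := by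
    intro y hy
    have hy' : y ∈ Ico (0 : ℝ) (6 / 5) := ⟨hy.1, hy.2.trans_lt hX1⟩
    have h0 : 0 ≤ tSeries y := by
      rcases hy.1.eq_or_lt with rfl | h
      · rw [tSeries_zero]
      · exact (tSeries_pos ⟨h, hy'.2⟩).le
    have h1 : tSeries y ≤ 1.1 := by
      by_contra! hlt
      have hc : ContinuousOn tSeries (Icc 0 y) :=
        continuousOn_tSeries.mono ((Icc_subset_Icc_right hy.2).trans hsub)
      obtain ⟨z, hz, hz1⟩ := intermediate_value_Ico hy.1 hc
        (show (1.1 : ℝ) ∈ Ico (tSeries 0) (tSeries y) from ⟨by rw [tSeries_zero]; norm_num, hlt⟩)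
      have := xfun_tSeries ⟨hz.1, hz.2.trans hy'.2⟩
      rw [hz1] at this
      linarith [hz.2, hy.2]
    have := hleft _ ⟨h0, h1⟩
    rwa [xfun_tSeries hy'] at this
  have hcd : ContDiffOn ℝ 7 tSeries (Ioo (-(6 / 5)) (6 / 5)) :=
    contDiffOn_seriesDeriv abs_wCoeff_le 1 7 0
  refine ⟨(hcd.mono hsub).congr heq, fun y hy => ?_⟩
  rw [iteratedDerivWithin_congr heq hy, iteratedDerivWithin_eq_iteratedDeriv
    (uniqueDiffOn_Icc hX0) (hcd.contDiffAt (isOpen_Ioo.mem_nhds (hsub hy))) hy, tSeries,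
    iteratedDeriv_seriesDeriv abs_wCoeff_le 1 7 (hsub hy)]
  refine abs_seriesDeriv_seven_le hy.1 ?_
  have : y ^ 2 ≤ xfun 1.1 ^ 2 := pow_le_pow_left₀ hy.1 hy.2 2
  norm_num at hX ⊢
  linarith
end
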